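/- arXiv:1001.1576 — 4 statements merged into one kernel-verified Lean document; each statement's English description precedes it below -/
import Mathlib

section
/- For any δ, R > 0 there exists a Lipschitz continuous set-valued map F_L : X → 𝒞(X) (i.e., there is L > 0 with F_L(x) ⊆ F_L(y) + L|x−y|·B̄₁ for all x, y ∈ X, and each F_L(x) is a nonempty compact convex subset of X) such that F(x) ⊆ F_L(x) ⊆ clconv F(x + δ·B̄₁) + δ·B̄₁ for all x ∈ B̄_R, where B̄_R is the closed ball of radius R centered at 0. -/
/-!
Cover the compact set `K` by finitely many small balls with centres `i ∈ K`, let `A i` be the closed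
convex hull of the values of `F` over the ball around `i`, and average these sets with a Lipschitz
partition of unity `w`: `F_L x = ∑ i, w i x • A i` (a Minkowski sum). If `w i x ≠ 0`, then `x` is
close to `i`, so that `F x ⊆ A i ⊆ clconv F (x + δ B̄₁)`; both inclusions survive averaging.
An upper semicontinuous map with compact values is locally bounded, hence bounded near `K`; so the
`A i` lie in a common bounded set, and `F_L` inherits the Lipschitz continuity of `w`.
-/

open Set Filter Topology MeasureTheory Metric Pointwise

namespace DI

/-- The phase space `X = ℝ^m`. -/
abbrev X (m : ℕ) := EuclideanSpace ℝ (Fin m)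

variable {m : ℕ}

/-- Standing assumptions (H1)–(H2): `F x` is a nonempty convex compact set for every `x`,
and `F` is upper semicontinuous (as a set-valued map). -/
def Standing (F : X m → Set (X m)) : Prop :=
  (∀ x, (F x).Nonempty ∧ Convex ℝ (F x) ∧ IsCompact (F x)) ∧
  (∀ x, ∀ ε > 0, ∃ δ > 0, ∀ y, dist y x < δ → F y ⊆ Metric.thickening ε (F x))

/-- `γ` is a solution of the differential inclusion `x' ∈ F x` on the set `I`:
it is an indefinite integral (hence absolutely continuous on compact subintervals)
of an integrable selection `g` with `g u ∈ F (γ u)` for a.e. `u ∈ I`. -/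
def IsSolOn (F : X m → Set (X m)) (γ : ℝ → X m) (I : Set ℝ) : Prop :=
  ∃ g : ℝ → X m,
    (∀ s ∈ I, ∀ t ∈ I, IntervalIntegrable g volume s t ∧ γ t = γ s + ∫ u in s..t, g u) ∧
    (∀ᵐ u ∂(volume.restrict I), g u ∈ F (γ u))

/-- The reachable set `ℛ(t)x` of the inclusion `x' ∈ F x`. -/
def reach (F : X m → Set (X m)) (t : ℝ) (x : X m) : Set (X m) :=
  {y | ∃ γ : ℝ → X m, IsSolOn F γ (Icc 0 t) ∧ γ 0 = x ∧ γ t = y}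

/-- `ℛ(t)A`. -/
def reachSet (F : X m → Set (X m)) (t : ℝ) (A : Set (X m)) : Set (X m) :=
  ⋃ x ∈ A, reach F t x

/-- No solution starting in `B` blows up on `[0,T]`: every solution on a subinterval
`[0,s] ⊆ [0,T]` starting in `B` extends to a solution on `[0,T]`. -/
def NoBlowupUpTo (F : X m → Set (X m)) (B : Set (X m)) (T : ℝ) : Prop :=
  ∀ s ∈ Icc (0:ℝ) T, ∀ γ : ℝ → X m, IsSolOn F γ (Icc 0 s) → γ 0 ∈ B →
    ∃ γ' : ℝ → X m, IsSolOn F γ' (Icc 0 T) ∧ EqOn γ' γ (Icc 0 s)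

/-- No solution starting in `B` blows up in finite time. -/
def NoBlowup (F : X m → Set (X m)) (B : Set (X m)) : Prop :=
  ∀ T > 0, NoBlowupUpTo F B T

/-- `A` attracts `B` (in the strong sense): no solution from `B` blows up in finite
time and `d_H(ℛ(t)B, A) → 0` as `t → ∞`. -/
def Attracts (F : X m → Set (X m)) (A B : Set (X m)) : Prop :=
  NoBlowup F B ∧
  ∀ ε > 0, ∃ T : ℝ, ∀ t ≥ T, ∀ y ∈ reachSet F t B, Metric.infDist y A < ε

/-- The attraction basin `Ω(A)`. -/
def basin (F : X m → Set (X m)) (A : Set (X m)) : Set (X m) :=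
  {x | Attracts F A {x}}

/-- `A` is positively invariant. -/
def PosInvariant (F : X m → Set (X m)) (A : Set (X m)) : Prop :=
  ∀ t ≥ (0:ℝ), reachSet F t A ⊆ A

/-- `A` is invariant. -/
def Invariant (F : X m → Set (X m)) (A : Set (X m)) : Prop :=
  ∀ t ≥ (0:ℝ), reachSet F t A = A

/-- The ω-limit set `ω(A)`. -/
def omegaLim (F : X m → Set (X m)) (A : Set (X m)) : Set (X m) :=
  {y | ∃ (t : ℕ → ℝ) (p : ℕ → X m), Tendsto t atTop atTop ∧
    (∀ n, p n ∈ reachSet F (t n) A) ∧ Tendsto p atTop (𝓝 y)}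

/-- `𝒜` is an attractor: a compact set admitting a neighborhood `U` with `ω(U) = 𝒜`. -/
def IsAttractor (F : X m → Set (X m)) (𝒜 : Set (X m)) : Prop :=
  IsCompact 𝒜 ∧ ∃ U : Set (X m), 𝒜 ⊆ interior U ∧ omegaLim F U = 𝒜

/-- `O` is an attractor neighborhood of `𝒜`: a positively invariant neighborhood of `𝒜`
contained in the attraction basin `Ω(𝒜)`. -/
def IsAttractorNbhd (F : X m → Set (X m)) (𝒜 O : Set (X m)) : Prop :=
  𝒜 ⊆ interior O ∧ PosInvariant F O ∧ O ⊆ basin F 𝒜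

/-- The attraction basin of `A` in `U`: `Ω^U(A) = Ω(A) ∩ {x ∈ U : ℛ(t)x ⊆ U ∀ t ≥ 0}`. -/
def basinIn (F : X m → Set (X m)) (U A : Set (X m)) : Set (X m) :=
  basin F A ∩ {x ∈ U | ∀ t ≥ (0:ℝ), reach F t x ⊆ U}

/-- The right-hand side of the inflated inclusion:
`clconv F(x + δ B̄₁) + δ B̄₁`. -/
def inflate (F : X m → Set (X m)) (δ : ℝ) (x : X m) : Set (X m) :=
  closure (convexHull ℝ (⋃ y ∈ Metric.closedBall x δ, F y)) +
    Metric.closedBall (0 : X m) δ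

/-- `S` is weakly invariant: through every point of `S` passes a complete
solution contained in `S`. -/
def WeaklyInvariant (F : X m → Set (X m)) (S : Set (X m)) : Prop :=
  ∀ x ∈ S, ∃ γ : ℝ → X m, IsSolOn F γ univ ∧ γ 0 = x ∧ range γ ⊆ S

/-- `A` is an attractor in `𝒜`: compact, `A ⊆ 𝒜`, and `ω(U ∩ 𝒜) = A` for some
neighborhood `U` of `A`. -/
def IsAttractorIn (F : X m → Set (X m)) (𝒜 A : Set (X m)) : Prop :=
  IsCompact A ∧ A ⊆ 𝒜 ∧ ∃ U : Set (X m), A ⊆ interior U ∧ omegaLim F (U ∩ 𝒜) = A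

/-- The dual repeller `A* = {x ∈ 𝒜 : ω(x) ∖ A ≠ ∅}` of `A` in `𝒜`. -/
def dualRepeller (F : X m → Set (X m)) (𝒜 A : Set (X m)) : Set (X m) :=
  {x ∈ 𝒜 | (omegaLim F {x} \ A).Nonempty}

/-- The ω-limit set of a complete solution. -/
def omegaOf (γ : ℝ → X m) : Set (X m) :=
  {y | ∃ t : ℕ → ℝ, Tendsto t atTop atTop ∧ Tendsto (fun n => γ (t n)) atTop (𝓝 y)}

/-- The α-limit set of a complete solution. -/
def alphaOf (γ : ℝ → X m) : Set (X m) :=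
  {y | ∃ t : ℕ → ℝ, Tendsto t atTop atBot ∧ Tendsto (fun n => γ (t n)) atTop (𝓝 y)}

/-- The unstable set `W^u(S)` (within `𝒜`). -/
def unstableSet (F : X m → Set (X m)) (𝒜 S : Set (X m)) : Set (X m) :=
  {x | ∃ γ : ℝ → X m, IsSolOn F γ univ ∧ range γ ⊆ 𝒜 ∧ γ 0 = x ∧ alphaOf γ ⊆ S}

/-- `A 0 ⊆ A 1 ⊆ ⋯ ⊆ A l` is a Morse filtration of the attractor `𝒜`. -/
def IsMorseFiltration (F : X m → Set (X m)) (𝒜 : Set (X m)) (l : ℕ)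
    (A : ℕ → Set (X m)) : Prop :=
  A 0 = ∅ ∧ A l = 𝒜 ∧ (∀ k < l, A k ⊆ A (k+1)) ∧ ∀ k ≤ l, IsAttractorIn F 𝒜 (A k)

/-- `M 1, …, M l` is a Morse decomposition of the attractor `𝒜`. -/
def IsMorseDecomposition (F : X m → Set (X m)) (𝒜 : Set (X m)) (l : ℕ)
    (M : ℕ → Set (X m)) : Prop :=
  (∀ k, 1 ≤ k → k ≤ l → IsCompact (M k) ∧ M k ⊆ 𝒜) ∧
  ∃ A : ℕ → Set (X m), IsMorseFiltration F 𝒜 l A ∧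
    ∀ k, 1 ≤ k → k ≤ l → M k = A k ∩ dualRepeller F 𝒜 (A (k-1))

/-- `V` is radially unbounded (class `𝒦∞`) on the open set `U`. -/
def RadiallyUnbounded (U : Set (X m)) (V : X m → ℝ) : Prop :=
  ∀ R > (0:ℝ), ∃ K : Set (X m), K ⊆ U ∧ IsCompact K ∧ ∀ x ∈ U \ K, V x > R

/-- `V` is locally Lipschitz on `O`. -/
def LocallyLipschitzOn (O : Set (X m)) (V : X m → ℝ) : Prop :=
  ∀ x ∈ O, ∃ ε > (0:ℝ), ∃ L : NNReal, LipschitzOnWith L V (Metric.ball x ε ∩ O)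

/-- The set-valued map `F` is locally Lipschitz:
`F x ⊆ F y + L‖x - y‖ B̄₁` on compact sets. -/
def LocallyLipschitzMap (F : X m → Set (X m)) : Prop :=
  ∀ K : Set (X m), IsCompact K → ∃ L > (0:ℝ), ∀ x ∈ K, ∀ y ∈ K,
    F x ⊆ F y + Metric.closedBall (0 : X m) (L * ‖x - y‖)

/-- The Dini supderivative `D⁺_v V(x) = limsup_{τ→0⁺} (V(x+τv) - V x)/τ`. -/
noncomputable def diniSup (V : X m → ℝ) (x v : X m) : ℝ :=
  limsup (fun τ : ℝ => (V (x + τ • v) - V x) / τ) (𝓝[>] 0)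

/-- `A` is a strong deformation retract of `Y`. -/
def IsSDR (A Y : Set (X m)) : Prop :=
  A ⊆ Y ∧ ∃ H : ℝ × X m → X m, ContinuousOn H (Icc (0:ℝ) 1 ×ˢ Y) ∧
    (∀ σ ∈ Icc (0:ℝ) 1, ∀ y ∈ Y, H (σ, y) ∈ Y) ∧
    (∀ y ∈ Y, H (0, y) = y) ∧ (∀ y ∈ Y, H (1, y) ∈ A) ∧
    (∀ σ ∈ Icc (0:ℝ) 1, ∀ a ∈ A, H (σ, a) = a)

/-- `V` is a Morse–Lyapunov function of the Morse decomposition `M` of `𝒜` on the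
attraction basin `Ω(𝒜)`: continuous, constant on each Morse set, and strictly
decreasing along solutions lying in `Ω(𝒜) ∖ 𝒟`, where `𝒟 = ⋃ₖ M k`. -/
def IsMLFunction (F : X m → Set (X m)) (𝒜 : Set (X m)) (l : ℕ) (M : ℕ → Set (X m))
    (V : X m → ℝ) : Prop :=
  ContinuousOn V (basin F 𝒜) ∧
  (∀ k, 1 ≤ k → k ≤ l → ∃ c : ℝ, ∀ x ∈ M k, V x = c) ∧
  (∀ a b : ℝ, ∀ γ : ℝ → X m, IsSolOn F γ (Icc a b) →
    (∀ t ∈ Icc a b, γ t ∈ basin F 𝒜 \ ⋃ k ∈ Icc 1 l, M k) →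
    StrictAntiOn (fun t => V (γ t)) (Icc a b))

/-- A strict Morse–Lyapunov function: in addition `V(M i) < V(M j)` whenever
`i < j` and both Morse sets are nonempty. -/
def IsStrictML (F : X m → Set (X m)) (𝒜 : Set (X m)) (l : ℕ) (M : ℕ → Set (X m))
    (V : X m → ℝ) : Prop :=
  IsMLFunction F 𝒜 l M V ∧
  ∀ i j, 1 ≤ i → i < j → j ≤ l → ∀ x ∈ M i, ∀ y ∈ M j, V x < V y

section LipschitzWeights

open scoped NNReal

theorem lipschitzWith_finsetSum {α ι E : Type*} [PseudoEMetricSpace α] [SeminormedAddCommGroup E]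
    {s : Finset ι} {K : ι → ℝ≥0} {f : ι → α → E} (hf : ∀ i ∈ s, LipschitzWith (K i) (f i)) :
    LipschitzWith (∑ i ∈ s, K i) fun x => ∑ i ∈ s, f i x := by
  classical
  induction s using Finset.induction_on with
  | empty => simpa using LipschitzWith.const (0 : E)
  | insert i s hi ih =>
    simp only [Finset.sum_insert hi]
    exact (hf i (Finset.mem_insert_self i s)).add
      (ih fun j hj => hf j (Finset.mem_insert_of_mem hj))

theorem abs_div_sub_div_le {𝕜 : Type*} [Field 𝕜] [LinearOrder 𝕜] [IsStrictOrderedRing 𝕜]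
    {a b p q c : 𝕜} (hc : 0 < c) (hp : c ≤ p) (hq : 0 < q) (hb : |b| ≤ q) :
    |a / p - b / q| ≤ (|a - b| + |p - q|) / c := by
  have hp₀ : 0 < p := hc.trans_le hp
  have key : a / p - b / q = ((a - b) - b / q * (p - q)) / p := by
    field_simp
    ring
  have hbq : |b / q| ≤ 1 := by
    rwa [abs_div, abs_of_pos hq, div_le_one hq]
  calc |a / p - b / q| = |(a - b) - b / q * (p - q)| / p := by
        rw [key, abs_div, abs_of_pos hp₀]
    _ ≤ (|a - b| + |b / q| * |p - q|) / p := by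
        rw [← abs_mul]
        gcongr
        exact abs_sub _ _
    _ ≤ (|a - b| + 1 * |p - q|) / c := by gcongr
    _ = (|a - b| + |p - q|) / c := by rw [one_mul]

theorem lipschitzWith_div {α : Type*} [PseudoMetricSpace α] {f g : α → ℝ} {Kf Kg c : ℝ≥0}
    (hc : 0 < c) (hf : LipschitzWith Kf f) (hg : LipschitzWith Kg g) (hcg : ∀ x, c ≤ g x)
    (hfg : ∀ x, |f x| ≤ g x) : LipschitzWith ((Kf + Kg) / c) fun x => f x / g x := by
  refine LipschitzWith.of_dist_le_mul fun x y => ?_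
  have hc' : (0 : ℝ) < c := hc
  have hfxy := hf.dist_le_mul x y
  have hgxy := hg.dist_le_mul x y
  rw [Real.dist_eq] at hfxy hgxy ⊢
  calc |f x / g x - f y / g y| ≤ (|f x - f y| + |g x - g y|) / c :=
        abs_div_sub_div_le hc' (hcg x) (hc'.trans_le (hcg y)) (hfg y)
    _ ≤ (Kf * dist x y + Kg * dist x y) / c := by gcongr
    _ = ((Kf + Kg) / c : ℝ≥0) * dist x y := by
        push_cast
        ring

variable {α : Type*} [PseudoMetricSpace α] {t : Finset α} {r : ℝ} {i x : α}

/-- The cone-shaped bump `(r - d(x, i))⁺` of radius `r` around the centre `i`, the unnormalized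
form of `bumpWeight`. -/
noncomputable def coneBump (r : ℝ) (i x : α) : ℝ :=
  max (r - dist x i) 0

theorem coneBump_nonneg : 0 ≤ coneBump r i x :=
  le_max_right _ _

theorem sub_dist_le_coneBump : r - dist x i ≤ coneBump r i x :=
  le_max_left _ _

theorem dist_lt_of_coneBump_ne_zero (h : coneBump r i x ≠ 0) : dist x i < r := by
  contrapose! h
  exact max_eq_right (sub_nonpos.2 h)

theorem lipschitzWith_coneBump (r : ℝ) (i : α) : LipschitzWith 1 (coneBump r i) := by
  have h := ((LipschitzWith.const r).sub (LipschitzWith.dist_left i)).max_const 0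
  rwa [zero_add] at h

/-- The bumps at the centres `t`, normalized into a partition of unity on `⋃ i ∈ t, ball i (r / 2)`.
There their sum exceeds `r / 2`; cutting the denominator off at this value keeps the weights
Lipschitz on the whole space. -/
noncomputable def bumpWeight (t : Finset α) (r : ℝ) (i x : α) : ℝ :=
  coneBump r i x / max (∑ j ∈ t, coneBump r j x) (r / 2)

theorem bumpWeight_nonneg : 0 ≤ bumpWeight t r i x :=
  div_nonneg coneBump_nonneg (le_max_of_le_left (Finset.sum_nonneg fun _ _ => coneBump_nonneg))

theorem dist_lt_of_bumpWeight_ne_zero (h : bumpWeight t r i x ≠ 0) : dist x i < r :=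
  dist_lt_of_coneBump_ne_zero (div_ne_zero_iff.1 h).1

theorem sum_bumpWeight_eq_one (hr : 0 < r) (hx : x ∈ ⋃ i ∈ t, ball i (r / 2)) :
    ∑ i ∈ t, bumpWeight t r i x = 1 := by
  obtain ⟨i, hi, hxi⟩ := mem_iUnion₂.1 hx
  have hsum : r / 2 ≤ ∑ j ∈ t, coneBump r j x :=
    calc r / 2 ≤ r - dist x i := by linarith [mem_ball.1 hxi]
      _ ≤ coneBump r i x := sub_dist_le_coneBump
      _ ≤ ∑ j ∈ t, coneBump r j x :=
        Finset.single_le_sum (f := fun j => coneBump r j x) (fun _ _ => coneBump_nonneg) hi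
  simp only [bumpWeight, max_eq_left hsum]
  rw [← Finset.sum_div, div_self (by linarith)]

theorem exists_lipschitzWith_bumpWeight (t : Finset α) (hr : 0 < r) :
    ∃ C : ℝ≥0, ∀ i ∈ t, LipschitzWith C (bumpWeight t r i) := by
  lift r to ℝ≥0 using hr.le
  refine ⟨(1 + ∑ _j ∈ t, 1) / (r / 2), fun i hi => ?_⟩
  refine lipschitzWith_div (half_pos (NNReal.coe_pos.1 hr)) (lipschitzWith_coneBump _ i)
    ((lipschitzWith_finsetSum fun j _ => lipschitzWith_coneBump _ j).max_const _)
    (fun x => ?_) fun x => ?_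
  · push_cast
    exact le_max_right _ _
  · rw [abs_of_nonneg coneBump_nonneg]
    exact le_max_of_le_left
      (Finset.single_le_sum (f := fun j => coneBump (r : ℝ) j x) (fun _ _ => coneBump_nonneg) hi)

end LipschitzWeights

section MinkowskiSum

variable {ι E : Type*} {s : Finset ι} {A : ι → Set E} {B : Set E}

theorem nonempty_finsetSum [AddCommMonoid E] (h : ∀ i ∈ s, (A i).Nonempty) :
    (∑ i ∈ s, A i).Nonempty :=
  Finset.sum_induction A Set.Nonempty (fun _ _ => Set.Nonempty.add) zero_nonempty h

theorem isCompact_finsetSum [AddCommMonoid E] [TopologicalSpace E] [ContinuousAdd E]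
    (h : ∀ i ∈ s, IsCompact (A i)) : IsCompact (∑ i ∈ s, A i) :=
  Finset.sum_induction A IsCompact (fun _ _ => IsCompact.add) isCompact_singleton h

theorem mem_sum_smul {R : Type*} [AddCommMonoid E] [SMul R E] {w : ι → R} {v : E} :
    v ∈ ∑ i ∈ s, w i • A i ↔ ∃ a : ι → E, (∀ i ∈ s, a i ∈ A i) ∧ ∑ i ∈ s, w i • a i = v := by
  rw [mem_finsetSum]
  constructor
  · rintro ⟨g, hg, rfl⟩
    choose! a ha using fun i (hi : i ∈ s) => mem_smul_set.1 (hg hi)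
    exact ⟨a, fun i hi => (ha i hi).1, Finset.sum_congr rfl fun i hi => (ha i hi).2⟩
  · rintro ⟨a, ha, rfl⟩
    exact ⟨fun i => w i • a i, fun hi => smul_mem_smul_set (ha _ hi), rfl⟩

theorem subset_sum_smul {R : Type*} [Semiring R] [AddCommMonoid E] [Module R E] {w : ι → R}
    (hw : ∑ i ∈ s, w i = 1) (hA : ∀ i ∈ s, (A i).Nonempty) (hB : ∀ i ∈ s, w i ≠ 0 → B ⊆ A i) :
    B ⊆ ∑ i ∈ s, w i • A i := by
  intro v hv
  have hterm : ∀ i ∈ s, ∃ a ∈ A i, w i • a = w i • v := by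
    intro i hi
    by_cases hwi : w i = 0
    · obtain ⟨a, ha⟩ := hA i hi
      exact ⟨a, ha, by simp [hwi]⟩
    · exact ⟨v, hB i hi hwi hv, rfl⟩
  choose! a haA hav using hterm
  refine mem_sum_smul.2 ⟨a, haA, ?_⟩
  rw [Finset.sum_congr rfl hav, ← Finset.sum_smul, hw, one_smul]

theorem sum_smul_subset_of_convex {𝕜 : Type*} [Field 𝕜] [LinearOrder 𝕜] [IsStrictOrderedRing 𝕜]
    [AddCommGroup E] [Module 𝕜 E] {w : ι → 𝕜} (hw₀ : ∀ i ∈ s, 0 ≤ w i)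
    (hw : ∑ i ∈ s, w i = 1) (hB : Convex 𝕜 B)
    (hA : ∀ i ∈ s, w i ≠ 0 → A i ⊆ B) : ∑ i ∈ s, w i • A i ⊆ B := by
  intro v hv
  obtain ⟨a, ha, rfl⟩ := mem_sum_smul.1 hv
  have hsupport : ∑ i ∈ s with w i ≠ 0, w i • a i = ∑ i ∈ s, w i • a i :=
    Finset.sum_filter_of_ne fun i _ h => left_ne_zero_of_smul h
  rw [← hsupport]
  refine hB.sum_mem (fun i hi => hw₀ i (Finset.mem_filter.1 hi).1)
    ((Finset.sum_filter_ne_zero s).trans hw) fun i hi => ?_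
  obtain ⟨his, hwi⟩ := Finset.mem_filter.1 hi
  exact hA i his hwi (ha i his)

theorem sum_smul_subset_add_closedBall [SeminormedAddCommGroup E] [NormedSpace ℝ E] {M : ℝ}
    (hM : ∀ i ∈ s, A i ⊆ closedBall 0 M) (u v : ι → ℝ) :
    ∑ i ∈ s, u i • A i ⊆ ∑ i ∈ s, v i • A i + closedBall 0 ((∑ i ∈ s, |u i - v i|) * M) := by
  intro z hz
  obtain ⟨a, ha, rfl⟩ := mem_sum_smul.1 hz
  refine mem_add.2 ⟨_, mem_sum_smul.2 ⟨a, ha, rfl⟩, ∑ i ∈ s, (u i - v i) • a i, ?_, ?_⟩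
  · rw [mem_closedBall_zero_iff, Finset.sum_mul]
    refine norm_sum_le_of_le s fun i hi => ?_
    rw [norm_smul, Real.norm_eq_abs]
    gcongr
    exact mem_closedBall_zero_iff.1 (hM i hi (ha i hi))
  · simp only [sub_smul, Finset.sum_sub_distrib, add_sub_cancel]

end MinkowskiSum

section HullAverage

variable {α E : Type*} [PseudoMetricSpace α] {F : α → Set E} {t : Finset α} {r s : ℝ} {x y : α}

theorem exists_isBounded_biUnion_cthickening [Bornology E] {K : Set α} (hK : IsCompact K)
    (hF : ∀ x ∈ K, ∃ U ∈ 𝓝 x, Bornology.IsBounded (⋃ y ∈ U, F y)) :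
    ∃ ε > 0, Bornology.IsBounded (⋃ y ∈ cthickening ε K, F y) := by
  have hnhds : ∃ U ∈ 𝓝ˢ K, Bornology.IsBounded (⋃ y ∈ U, F y) := by
    refine hK.induction_on (p := fun S => ∃ U ∈ 𝓝ˢ S, Bornology.IsBounded (⋃ y ∈ U, F y))
      ⟨∅, by simp⟩ ?_ ?_ ?_
    · rintro S T hST ⟨U, hU, hbdd⟩
      exact ⟨U, nhdsSet_mono hST hU, hbdd⟩
    · rintro S T ⟨U, hU, hUbdd⟩ ⟨V, hV, hVbdd⟩
      refine ⟨U ∪ V, union_mem_nhdsSet hU hV, ?_⟩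
      rw [biUnion_union]
      exact hUbdd.union hVbdd
    · intro x hx
      obtain ⟨U, hU, hbdd⟩ := hF x hx
      exact ⟨interior U, mem_nhdsWithin_of_mem_nhds (interior_mem_nhds.2 hU), U,
        subset_interior_iff_mem_nhdsSet.1 Subset.rfl, hbdd⟩
  obtain ⟨U, hU, hbdd⟩ := hnhds
  obtain ⟨ε, hε, hεU⟩ := (hasBasis_nhdsSet_cthickening hK).mem_iff.1 hU
  exact ⟨ε, hε, hbdd.subset (biUnion_subset_biUnion_left hεU)⟩

variable [SeminormedAddCommGroup E] [NormedSpace ℝ E]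

/-- The set `clconv F (x + r B̄₁)`. It serves both as a building block of the approximation (centred
at the points of a finite net) and as its upper bound (centred at `x`). -/
def ballHull (F : α → Set E) (r : ℝ) (x : α) : Set E :=
  closedConvexHull ℝ (⋃ y ∈ closedBall x r, F y)

theorem subset_ballHull (h : y ∈ closedBall x r) : F y ⊆ ballHull F r x :=
  (subset_biUnion_of_mem (u := F) h).trans subset_closedConvexHull

theorem ballHull_subset_ballHull (h : closedBall x r ⊆ closedBall y s) :
    ballHull F r x ⊆ ballHull F s y :=
  (closedConvexHull ℝ).monotone (biUnion_subset_biUnion_left h)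

theorem ballHull_subset_closedBall {c : E} {M : ℝ}
    (h : ⋃ y ∈ closedBall x r, F y ⊆ closedBall c M) : ballHull F r x ⊆ closedBall c M :=
  closedConvexHull_min h (convex_closedBall c M) isClosed_closedBall

/-- The average of the hulls of `F` over the balls of radius `r` centred in `t`, weighted by
the partition of unity `bumpWeight t r`. It is the Lipschitz approximation of `F`. -/
noncomputable def hullAverage (F : α → Set E) (t : Finset α) (r : ℝ) (x : α) : Set E :=
  ∑ i ∈ t, bumpWeight t r i x • ballHull F r i

theorem hullAverage_nonempty (hr : 0 ≤ r) (hF : ∀ i ∈ t, (F i).Nonempty) :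
    (hullAverage F t r x).Nonempty :=
  nonempty_finsetSum fun i hi =>
    ((hF i hi).mono (subset_ballHull (mem_closedBall_self hr))).smul_set

theorem convex_hullAverage : Convex ℝ (hullAverage F t r x) :=
  convex_sum _ fun _ _ => convex_closedConvexHull.smul _

theorem isCompact_hullAverage [ProperSpace E] {M : ℝ}
    (hM : ∀ i ∈ t, ballHull F r i ⊆ closedBall 0 M) : IsCompact (hullAverage F t r x) :=
  isCompact_finsetSum fun i hi =>
    ((isCompact_closedBall 0 M).of_isClosed_subset isClosed_closedConvexHull (hM i hi)).smul _

theorem subset_hullAverage (hr : 0 < r) (hF : ∀ i ∈ t, (F i).Nonempty)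
    (hx : x ∈ ⋃ i ∈ t, ball i (r / 2)) : F x ⊆ hullAverage F t r x :=
  subset_sum_smul (sum_bumpWeight_eq_one hr hx)
    (fun i hi => (hF i hi).mono (subset_ballHull (mem_closedBall_self hr.le)))
    fun _ _ h => subset_ballHull (dist_lt_of_bumpWeight_ne_zero h).le

theorem hullAverage_subset_ballHull (hr : 0 < r) (hx : x ∈ ⋃ i ∈ t, ball i (r / 2)) :
    hullAverage F t r x ⊆ ballHull F (2 * r) x := by
  refine sum_smul_subset_of_convex (fun _ _ => bumpWeight_nonneg) (sum_bumpWeight_eq_one hr hx)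
    convex_closedConvexHull fun i _ h => ?_
  refine ballHull_subset_ballHull (closedBall_subset_closedBall' ?_)
  linarith [dist_lt_of_bumpWeight_ne_zero h, dist_comm x i]

theorem exists_lipschitz_hullAverage {M : ℝ} (hr : 0 < r) (hM₀ : 0 ≤ M)
    (hM : ∀ i ∈ t, ballHull F r i ⊆ closedBall 0 M) :
    ∃ L > (0 : ℝ), ∀ x y,
      hullAverage F t r x ⊆ hullAverage F t r y + closedBall 0 (L * dist x y) := by
  obtain ⟨C, hC⟩ := exists_lipschitzWith_bumpWeight t hr
  refine ⟨t.card * C * M + 1, by positivity, fun x y =>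
    (sum_smul_subset_add_closedBall hM _ _).trans
      (add_subset_add_left (closedBall_subset_closedBall ?_))⟩
  calc (∑ i ∈ t, |bumpWeight t r i x - bumpWeight t r i y|) * M
      ≤ (∑ _i ∈ t, C * dist x y) * M := by
        gcongr with i hi
        exact (hC i hi).dist_le_mul x y
    _ = t.card * C * M * dist x y := by
        rw [Finset.sum_const, nsmul_eq_mul]
        ring
    _ ≤ (t.card * C * M + 1) * dist x y := by
        gcongr
        exact le_add_of_nonneg_right zero_le_one

theorem lipschitz_approximation_general [ProperSpace E] {K : Set α} (hK : IsCompact K)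
    (hne : ∀ x ∈ K, (F x).Nonempty)
    (hbdd : ∀ x ∈ K, ∃ U ∈ 𝓝 x, Bornology.IsBounded (⋃ y ∈ U, F y)) {δ : ℝ} (hδ : 0 < δ) :
    ∃ FL : α → Set E,
      (∀ x, (FL x).Nonempty ∧ Convex ℝ (FL x) ∧ IsCompact (FL x)) ∧
      (∃ L > (0 : ℝ), ∀ x y, FL x ⊆ FL y + closedBall 0 (L * dist x y)) ∧
      ∀ x ∈ K, F x ⊆ FL x ∧ FL x ⊆ ballHull F δ x := by
  obtain ⟨ε, hε, hεbdd⟩ := exists_isBounded_biUnion_cthickening hK hbdd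
  obtain ⟨M, hM₀, hM⟩ := hεbdd.subset_closedBall_lt 0 0
  obtain ⟨r, hr, hr_le⟩ : ∃ r > 0, r ≤ min ε (δ / 2) := ⟨_, lt_min hε (half_pos hδ), le_rfl⟩
  obtain ⟨hrε, hrδ⟩ := le_min_iff.1 hr_le
  obtain ⟨t, htK, ht, hcover⟩ := hK.finite_cover_balls (half_pos hr)
  lift t to Finset α using ht
  have hne_t : ∀ i ∈ t, (F i).Nonempty := fun i hi => hne i (htK hi)
  have hM_t : ∀ i ∈ t, ballHull F r i ⊆ closedBall 0 M := fun i hi =>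
    ballHull_subset_closedBall <| (biUnion_subset_biUnion_left <|
      (closedBall_subset_cthickening (htK hi) r).trans (cthickening_mono hrε K)).trans hM
  refine ⟨hullAverage F t r,
    fun x => ⟨hullAverage_nonempty hr.le hne_t, convex_hullAverage, isCompact_hullAverage hM_t⟩,
    exists_lipschitz_hullAverage hr hM₀.le hM_t,
    fun x hx => ⟨subset_hullAverage hr hne_t (hcover hx), ?_⟩⟩
  exact (hullAverage_subset_ballHull hr (hcover hx)).trans
    (ballHull_subset_ballHull (closedBall_subset_closedBall (by linarith)))

end HullAverage

theorem Standing.exists_isBounded_biUnion_nhds {F : X m → Set (X m)} (hF : Standing F) (x : X m) :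
    ∃ U ∈ 𝓝 x, Bornology.IsBounded (⋃ y ∈ U, F y) := by
  obtain ⟨ρ, hρ, h⟩ := hF.2 x 1 one_pos
  exact ⟨ball x ρ, ball_mem_nhds x hρ,
    ((hF.1 x).2.2.isBounded.thickening (δ := 1)).subset (iUnion₂_subset h)⟩

theorem ballHull_subset_inflate (F : X m → Set (X m)) {δ : ℝ} (hδ : 0 ≤ δ) (x : X m) :
    ballHull F δ x ⊆ inflate F δ x := by
  rw [ballHull, closedConvexHull_eq_closure_convexHull]
  exact subset_add_left _ (mem_closedBall_self hδ)

/-- Lemma 3.8: Lipschitz approximate selections: for any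
`δ, R > 0` there is a Lipschitz set-valued map `F_L` with nonempty compact convex
values such that `F(x) ⊆ F_L(x) ⊆ clconv F(x+δB̄₁) + δB̄₁` on the ball `B̄_R`. -/
theorem lipschitz_approximation {m : ℕ} (F : X m → Set (X m)) (hF : Standing F)
    (δ R : ℝ) (hδ : 0 < δ) (hR : 0 < R) :
    ∃ FL : X m → Set (X m),
      (∀ x, (FL x).Nonempty ∧ Convex ℝ (FL x) ∧ IsCompact (FL x)) ∧
      (∃ L > (0:ℝ), ∀ x y : X m,
        FL x ⊆ FL y + Metric.closedBall (0 : X m) (L * ‖x - y‖)) ∧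
      (∀ x ∈ Metric.closedBall (0 : X m) R, F x ⊆ FL x ∧ FL x ⊆ inflate F δ x) := by
  obtain ⟨FL, hvalues, hlipschitz, happrox⟩ := lipschitz_approximation_general
    (isCompact_closedBall 0 R) (fun x _ => (hF.1 x).1)
    (fun x _ => hF.exists_isBounded_biUnion_nhds x) hδ
  refine ⟨FL, hvalues, by simpa only [dist_eq_norm] using hlipschitz, fun x hx => ?_⟩
  exact ⟨(happrox x hx).1, (happrox x hx).2.trans (ballHull_subset_inflate F hδ.le x)⟩

end DI
end

section
/- Let 𝒜 be an attractor, let O₁, O₂ be open attractor neighborhoods of 𝒜, and for i = 1, 2 let Vᵢ ∈ C^∞(Oᵢ) be radially unbounded functions vanishing on 𝒜 satisfying max_{v ∈ F(x)} ∇Vᵢ(x)·v ≤ −wᵢ(x) on Oᵢ, with wᵢ ∈ C(Oᵢ) nonnegative, wᵢ = 0 on 𝒜 and wᵢ > 0 on Oᵢ ∖ 𝒜. Then for any compact set K ⊆ (O₁ ∩ O₂) ∖ 𝒜 there exists a smooth vector field Ψ ∈ C^∞(X, X) such that ∇Vᵢ(x)·Ψ(x) < 0 for all x ∈ K and i = 1,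 2. -/
/-!
At a point `x ∈ K` any `v ∈ F x` is a descent direction of both Lyapunov functions, and by
continuity of their gradients the constant `v` remains one near `x`. Since the common descent
directions at a point form an intersection of half-spaces, hence a convex set, a smooth partition
of unity glues these constants into one smooth vector field.
-/

open Set Filter Topology MeasureTheory Metric Pointwise

namespace DI

variable {m : ℕ}

section Manifold

open scoped Manifold ContDiff

variable {E : Type*} [NormedAddCommGroup E] [NormedSpace ℝ E] [FiniteDimensional ℝ E]
  {H : Type*} [TopologicalSpace H] (I : ModelWithCorners ℝ E H)
  {M : Type*} [TopologicalSpace M] [ChartedSpace H M] [IsManifold I ∞ M]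
  [SigmaCompactSpace M] [T2Space M]
  {G : Type*} [NormedAddCommGroup G] [NormedSpace ℝ G]
  {n : ℕ∞} {K : Set M}

theorem exists_contMDiffMap_forall_mem_convex_of_local_const_of_isClosed
    (hK : IsClosed K) {t : M → Set G} (ht : ∀ x ∈ K, Convex ℝ (t x))
    (hloc : ∀ x ∈ K, ∃ c, ∀ᶠ y in 𝓝[K] x, c ∈ t y) :
    ∃ g : C^n⟮I, M; 𝓘(ℝ, G), G⟯, ∀ x ∈ K, g x ∈ t x := by
  have hconst (x : M) : ∃ c, ∀ᶠ y in 𝓝 x, c ∈ ⋂ _ : y ∈ K, t y := by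
    simp only [mem_iInter]
    by_cases hx : x ∈ K
    · exact (hloc x hx).imp fun _ ↦ eventually_nhdsWithin_iff.1
    · exact ⟨0, (hK.isOpen_compl.eventually_mem hx).mono fun _ hy hyK ↦ absurd hyK hy⟩
  obtain ⟨g, hg⟩ := exists_contMDiffMap_forall_mem_convex_of_local_const I
    (fun x ↦ convex_iInter (ht x)) hconst
  exact ⟨g, fun x hx ↦ mem_iInter.1 (hg x) hx⟩

theorem exists_contMDiffMap_forall_clm_apply_neg {ι : Type*} [Finite ι] (hK : IsClosed K)
    {φ : ι → M → G →L[ℝ] ℝ} (hφ : ∀ i, ContinuousOn (φ i) K)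
    (hneg : ∀ x ∈ K, ∃ v, ∀ i, φ i x v < 0) :
    ∃ g : C^n⟮I, M; 𝓘(ℝ, G), G⟯, ∀ x ∈ K, ∀ i, φ i x (g x) < 0 := by
  refine exists_contMDiffMap_forall_mem_convex_of_local_const_of_isClosed I hK
    (t := fun x ↦ {v | ∀ i, φ i x v < 0}) (fun x _ ↦ ?_) fun x hx ↦ ?_
  · simp only [ofPred_forall]
    exact convex_iInter fun i ↦ convex_halfSpace_lt (φ i x).isLinear 0
  · obtain ⟨v, hv⟩ := hneg x hx
    exact ⟨v, eventually_all.2 fun i ↦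
      ((hφ i x hx).clm_apply continuousWithinAt_const).eventually_lt_const (hv i)⟩

end Manifold

theorem common_descent_vector_field_general {E : Type*} [NormedAddCommGroup E] [NormedSpace ℝ E]
    [FiniteDimensional ℝ E] {ι : Type*} [Finite ι] {K : Set E} (hK : IsClosed K)
    {V : ι → E → ℝ} (hV : ∀ i, ∀ x ∈ K, ContDiffAt ℝ 1 (V i) x)
    (hdescent : ∀ x ∈ K, ∃ v, ∀ i, fderiv ℝ (V i) x v < 0) :
    ∃ Ψ : E → E, ContDiff ℝ (⊤ : ℕ∞) Ψ ∧ ∀ x ∈ K, ∀ i, fderiv ℝ (V i) x (Ψ x) < 0 := by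
  have hfderiv (i : ι) : ContinuousOn (fderiv ℝ (V i)) K := fun x hx ↦
    ((hV i x hx).fderiv_right (m := 0) le_rfl).continuousAt.continuousWithinAt
  obtain ⟨Ψ, hΨ⟩ := exists_contMDiffMap_forall_clm_apply_neg (n := ⊤)
    (modelWithCornersSelf ℝ E) hK hfderiv hdescent
  exact ⟨Ψ, Ψ.contMDiff.contDiff, hΨ⟩

/-- Lemma 5.1: given two smooth radially unbounded Lyapunov
functions `V₁, V₂` of `𝒜` on open attractor neighborhoods `O₁, O₂`, for any
compact `K ⊆ (O₁ ∩ O₂) ∖ 𝒜` there is a smooth vector field `Ψ` with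
`∇Vᵢ(x)·Ψ(x) < 0` on `K` for `i = 1, 2`. -/
theorem common_descent_vector_field {m : ℕ} (F : X m → Set (X m)) (hF : Standing F)
    (𝒜 : Set (X m)) (h𝒜 : IsAttractor F 𝒜)
    (O₁ O₂ : Set (X m)) (hO₁o : IsOpen O₁) (hO₂o : IsOpen O₂)
    (hO₁ : IsAttractorNbhd F 𝒜 O₁) (hO₂ : IsAttractorNbhd F 𝒜 O₂)
    (V₁ V₂ w₁ w₂ : X m → ℝ)
    (hV₁ : ContDiffOn ℝ (⊤ : ℕ∞) V₁ O₁) (hV₂ : ContDiffOn ℝ (⊤ : ℕ∞) V₂ O₂)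
    (hru₁ : RadiallyUnbounded O₁ V₁) (hru₂ : RadiallyUnbounded O₂ V₂)
    (hV₁0 : ∀ x ∈ 𝒜, V₁ x = 0) (hV₂0 : ∀ x ∈ 𝒜, V₂ x = 0)
    (hw₁c : ContinuousOn w₁ O₁) (hw₂c : ContinuousOn w₂ O₂)
    (hw₁n : ∀ x ∈ O₁, 0 ≤ w₁ x) (hw₂n : ∀ x ∈ O₂, 0 ≤ w₂ x)
    (hw₁a : ∀ x ∈ 𝒜, w₁ x = 0) (hw₂a : ∀ x ∈ 𝒜, w₂ x = 0)
    (hw₁p : ∀ x ∈ O₁ \ 𝒜, 0 < w₁ x) (hw₂p : ∀ x ∈ O₂ \ 𝒜, 0 < w₂ x)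
    (hd₁ : ∀ x ∈ O₁, ∀ v ∈ F x, fderiv ℝ V₁ x v ≤ -w₁ x)
    (hd₂ : ∀ x ∈ O₂, ∀ v ∈ F x, fderiv ℝ V₂ x v ≤ -w₂ x)
    (K : Set (X m)) (hK : IsCompact K) (hKsub : K ⊆ (O₁ ∩ O₂) \ 𝒜) :
    ∃ Ψ : X m → X m, ContDiff ℝ (⊤ : ℕ∞) Ψ ∧
      ∀ x ∈ K, fderiv ℝ V₁ x (Ψ x) < 0 ∧ fderiv ℝ V₂ x (Ψ x) < 0 := by
  have hK₁ : K ⊆ O₁ \ 𝒜 := fun x hx ↦ ⟨(hKsub hx).1.1, (hKsub hx).2⟩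
  have hK₂ : K ⊆ O₂ \ 𝒜 := fun x hx ↦ ⟨(hKsub hx).1.2, (hKsub hx).2⟩
  have hV : ∀ i, ∀ x ∈ K, ContDiffAt ℝ 1 (![V₁, V₂] i) x := Fin.forall_fin_two.2
    ⟨fun x hx ↦ (hV₁.contDiffAt (hO₁o.mem_nhds (hK₁ hx).1)).of_le (by simp),
      fun x hx ↦ (hV₂.contDiffAt (hO₂o.mem_nhds (hK₂ hx).1)).of_le (by simp)⟩
  have hneg : ∀ x ∈ K, ∀ v ∈ F x, ∀ i, fderiv ℝ (![V₁, V₂] i) x v < 0 := fun x hx v hv ↦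
    Fin.forall_fin_two.2
      ⟨(hd₁ x (hK₁ hx).1 v hv).trans_lt (neg_neg_of_pos (hw₁p x (hK₁ hx))),
        (hd₂ x (hK₂ hx).1 v hv).trans_lt (neg_neg_of_pos (hw₂p x (hK₂ hx)))⟩
  obtain ⟨Ψ, hΨ, hΨneg⟩ := common_descent_vector_field_general hK.isClosed hV
    fun x hx ↦ (hF.1 x).1.imp (hneg x hx)
  exact ⟨Ψ, hΨ, fun x hx ↦ Fin.forall_fin_two.1 (hΨneg x hx)⟩

end DI
end

section
/- Let 𝒜 be an attractor, W an open attractor neighborhood of 𝒜, and let V ∈ C^∞(W) be a radially unbounded function vanishing on 𝒜 satisfying max_{v ∈ F(x)} ∇V(x)·v ≤ −w(x) for all x ∈ W, where w ∈ C(W) is nonnegative with w = 0 on 𝒜 and w > 0 on W ∖ 𝒜. Then for every ε > 0 the sublevel set V_ε = {x ∈ W : V(x) ≤ ε} is a strong deformation retract of W. -/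
open Set Filter Topology MeasureTheory Metric Pointwise

namespace DI

variable {m : ℕ}

/-!
Off `𝒜` the gradient of `V` does not vanish, since `∇V(x)·v ≤ -w(x) < 0` for `v ∈ F x`, and `V`
decreases at unit speed along the rescaled negative gradient `-∇V / ‖∇V‖²`. Following this field
from `x` for the time `(V x - ε)⁺` therefore ends in the sublevel set, and `H (σ, x)` is the point
reached after the fraction `σ` of that time. The field need not be Lipschitz on `W`, and it is
singular on `𝒜`, but a motion started at level at most `R` stays in the band `{ε ≤ V ≤ R}`, which
is compact because `V` is radially unbounded. Cutting the field off away from the band gives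
existence, uniqueness and continuous dependence on the starting point.
-/

/-- `IsSDR` for subsets of an arbitrary topological space. -/
def IsStrongDeformationRetract {Y : Type*} [TopologicalSpace Y] (A S : Set Y) : Prop :=
  A ⊆ S ∧ ∃ H : ℝ × Y → Y, ContinuousOn H (Icc (0 : ℝ) 1 ×ˢ S) ∧
    (∀ σ ∈ Icc (0 : ℝ) 1, ∀ y ∈ S, H (σ, y) ∈ S) ∧
    (∀ y ∈ S, H (0, y) = y) ∧ (∀ y ∈ S, H (1, y) ∈ A) ∧
    (∀ σ ∈ Icc (0 : ℝ) 1, ∀ a ∈ A, H (σ, a) = a)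

section UnitDescent

open scoped NNReal

lemma exists_Icc_forall_of_eventually_nhds {Y : Type*} [TopologicalSpace Y] {γ : ℝ → Y}
    {p : Y → Prop} {a b t : ℝ} (hγ : ContinuousOn γ (Icc a b)) (ht : t ∈ Ico a b)
    (hp : ∀ᶠ x in 𝓝 (γ t), p x) :
    ∃ c ∈ Ioc t b, ∀ s ∈ Icc t c, p (γ s) := by
  have hev : ∀ᶠ s in 𝓝[Icc t b] t, p (γ s) :=
    ((hγ t (Ico_subset_Icc_self ht)).mono (Icc_subset_Icc_left ht.1)).eventually hp
  rw [nhdsWithin_Icc_eq_nhdsGE ht.2] at hev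
  obtain ⟨u, hu, hsub⟩ := mem_nhdsGE_iff_exists_Icc_subset.1 hev
  exact ⟨min u b, ⟨lt_min hu ht.2, min_le_right _ _⟩,
    fun s hs => hsub ⟨hs.1, hs.2.trans (min_le_left _ _)⟩⟩

variable {E : Type*} [NormedAddCommGroup E] [NormedSpace ℝ E]
  {W : Set E} {V : E → ℝ} {G f : E → E} {γ γ₁ γ₂ : ℝ → E} {ε T : ℝ}

lemma exists_lipschitzWith_bounded_eventuallyEq [FiniteDimensional ℝ E] {C : Set E}
    (hC : IsCompact C) (hG : ∀ x ∈ C, ContDiffAt ℝ 1 G x) :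
    ∃ (K M : ℝ≥0) (f : E → E), LipschitzWith K f ∧ (∀ x, ‖f x‖ ≤ M) ∧ f =ᶠ[𝓝ˢ C] G := by
  have hU : IsOpen {x | ContDiffAt ℝ 1 G x} :=
    isOpen_iff_mem_nhds.2 fun x hx => ContDiffAt.eventually hx (by simp)
  obtain ⟨L, hL, hCL, hLU⟩ := exists_compact_between hC hU hG
  obtain ⟨χ, hχ_one, hχ_zero, -⟩ := exists_contMDiffMap_one_nhds_of_subset_interior (n := 1)
    (modelWithCornersSelf ℝ E) hC.isClosed hCL
  have hzero : ∀ x ∉ L, χ x • G x = 0 := fun x hx => by rw [hχ_zero x hx, zero_smul]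
  have hsupp : HasCompactSupport fun x => χ x • G x := HasCompactSupport.intro hL hzero
  have hdiff : ContDiff ℝ 1 fun x => χ x • G x := by
    refine contMDiff_iff_contDiff.1 (contMDiff_of_tsupport fun x hx => ?_)
    have hxL : x ∈ L :=
      closure_minimal (Function.support_subset_iff'.2 hzero) hL.isClosed hx
    exact (χ.contMDiff.contDiff.contDiffAt.smul (hLU hxL)).contMDiffAt
  obtain ⟨K, hK⟩ := hdiff.lipschitzWith_of_hasCompactSupport hsupp (by simp)
  obtain ⟨M, hM⟩ := hsupp.exists_bound_of_continuous hdiff.continuous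
  refine ⟨K, M.toNNReal, _, hK, fun x => (hM x).trans (Real.le_coe_toNNReal M), ?_⟩
  filter_upwards [hχ_one] with x hx
  rw [hx, one_smul]

lemma exists_flow_on_closedBall [CompleteSpace E] {K M : ℝ≥0} (hf : LipschitzWith K f)
    (hM : ∀ x, ‖f x‖ ≤ M) (x₀ : E) (r T : ℝ≥0) :
    ∃ φ : E × ℝ → E, ContinuousOn φ (closedBall x₀ r ×ˢ Icc (0 : ℝ) T) ∧
      ∀ x ∈ closedBall x₀ r, φ (x, 0) = x ∧
        IsIntegralCurveOn (fun t => φ (x, t)) (fun _ => f) (Icc 0 T) := by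
  have h : IsPicardLindelof (fun _ => f) (tmin := 0) (tmax := T) ⟨0, left_mem_Icc.2 T.2⟩
      x₀ (M * T + r) r M K :=
    { lipschitzOnWith := fun _ _ => hf.lipschitzOnWith
      continuousOn := fun _ _ => continuousOn_const
      norm_le := fun _ _ x _ => hM x
      mul_max_le := by simp }
  obtain ⟨φ, hφ, hφc⟩ := h.exists_forall_mem_closedBall_eq_hasDerivWithinAt_continuousOn
  exact ⟨φ, hφc, hφ⟩

lemma hasDerivWithinAt_Ici_of_isIntegralCurveOn_Icc {v : ℝ → E → E} {a b t : ℝ}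
    (hγ : IsIntegralCurveOn γ v (Icc a b)) (ht : t ∈ Ico a b) :
    HasDerivWithinAt γ (v t (γ t)) (Ici t) t :=
  (hγ t (Ico_subset_Icc_self ht)).mono_of_mem_nhdsWithin
    (mem_of_superset (Icc_mem_nhdsGE ht.2) (Icc_subset_Icc_left ht.1))

lemma differentiableAt_of_fderiv_apply_ne_zero {x v : E} (h : fderiv ℝ V x v ≠ 0) :
    DifferentiableAt ℝ V x := by
  contrapose! h
  simp [fderiv_zero_of_not_differentiableAt h]

lemma apply_eq_sub_of_forall_fderiv_apply_eq_neg_one {a b : ℝ}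
    (hγ : IsIntegralCurveOn γ (fun _ => f) (Icc a b))
    (hVf : ∀ t ∈ Icc a b, fderiv ℝ V (γ t) (f (γ t)) = -1) :
    ∀ t ∈ Icc a b, V (γ t) = V (γ a) - (t - a) := by
  have hVd : ∀ t ∈ Icc a b, DifferentiableAt ℝ V (γ t) := fun t ht =>
    differentiableAt_of_fderiv_apply_ne_zero (v := f (γ t)) (by simp [hVf t ht])
  have hconst : ∀ t ∈ Icc a b, V (γ t) + t = V (γ a) + a := by
    refine constant_of_has_deriv_right_zero (f := fun t => V (γ t) + t) ?_ fun t ht => ?_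
    · exact ContinuousOn.add (fun t ht => (hVd t ht).continuousAt.comp_continuousWithinAt
        (hγ.continuousOn t ht)) continuousOn_id
    · have ht' := Ico_subset_Icc_self ht
      have hderiv := ((hVd t ht').hasFDerivAt.comp_hasDerivWithinAt t
        (hasDerivWithinAt_Ici_of_isIntegralCurveOn_Icc hγ ht)).add (hasDerivWithinAt_id t (Ici t))
      rwa [hVf t ht', neg_add_cancel] at hderiv
  intro t ht
  linarith [hconst t ht]

/- The times up to which the conclusion holds form a closed set because the band is closed, and
an open one because the field descends on a neighbourhood of the band. -/
lemma mem_and_apply_eq_sub_of_isIntegralCurveOn (hW : IsOpen W)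
    (hband : IsClosed {x ∈ W | V x ∈ Icc (V (γ 0) - T) (V (γ 0))})
    (hVf : ∀ᶠ x in 𝓝ˢ {x ∈ W | V x ∈ Icc (V (γ 0) - T) (V (γ 0))}, fderiv ℝ V x (f x) = -1)
    (hγ : IsIntegralCurveOn γ (fun _ => f) (Icc 0 T)) (h0 : γ 0 ∈ W) :
    ∀ t ∈ Icc 0 T, γ t ∈ W ∧ V (γ t) = V (γ 0) - t := by
  set B := {x ∈ W | V x ∈ Icc (V (γ 0) - T) (V (γ 0))}
  have hVf_nhds : ∀ x ∈ B, ∀ᶠ y in 𝓝 x, fderiv ℝ V y (f y) = -1 :=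
    eventually_nhdsSet_iff_forall.1 hVf
  have hVB : ContinuousOn V B := fun x hx =>
    (differentiableAt_of_fderiv_apply_ne_zero (v := f x)
      (by simp [(hVf_nhds x hx).self_of_nhds])).continuousAt.continuousWithinAt
  have hclosed : IsClosed ({t | γ t ∈ W ∧ V (γ t) = V (γ 0) - t} ∩ Icc 0 T) := by
    have hVγ : ContinuousOn (fun t => V (γ t) + t) (Icc 0 T ∩ γ ⁻¹' B) :=
      (hVB.comp (hγ.continuousOn.mono inter_subset_left) fun t ht => ht.2).add continuousOn_id
    convert hVγ.preimage_isClosed_of_isClosed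
      (hγ.continuousOn.preimage_isClosed_of_isClosed isClosed_Icc hband)
      (isClosed_singleton (x := V (γ 0))) using 1
    ext t
    simp only [B, mem_inter_iff, mem_ofPred_eq, mem_preimage, mem_singleton_iff, mem_Icc]
    grind
  refine hclosed.Icc_subset_of_forall_mem_nhdsWithin ⟨h0, by simp⟩ ?_
  rintro t ⟨⟨htW, htV⟩, ht⟩
  have htB : γ t ∈ B := ⟨htW, by linarith [ht.2], by linarith [ht.1]⟩
  obtain ⟨c, hc, hWVf⟩ := exists_Icc_forall_of_eventually_nhds hγ.continuousOn ht
    ((hW.eventually_mem htW).and (hVf_nhds _ htB))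
  have hdescent := apply_eq_sub_of_forall_fderiv_apply_eq_neg_one
    (fun s hs => (hγ s ⟨ht.1.trans hs.1, hs.2.trans hc.2⟩).mono (Icc_subset_Icc ht.1 hc.2))
    fun s hs => (hWVf s hs).2
  filter_upwards [Icc_mem_nhdsGT hc.1] with s hs
  exact ⟨(hWVf s hs).1, by linarith [hdescent s hs]⟩

/-- `G` is a `C¹` vector field near `S` along which `V` decreases at unit speed. The second field
also makes `V` differentiable near `S`, as the junk value of `fderiv` is `0`. -/
structure IsUnitDescentFieldOn (V : E → ℝ) (G : E → E) (S : Set E) : Prop where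
  contDiffAt : ∀ x ∈ S, ContDiffAt ℝ 1 G x
  fderiv_apply : ∀ᶠ x in 𝓝ˢ S, fderiv ℝ V x (G x) = -1

/-- `γ` is an integral curve of `G` inside `W` that descends from the level `V (γ 0)` to the level
`ε` at unit speed. If `V (γ 0) ≤ ε`, the positive part reduces the time interval to `{0}`. -/
structure IsUnitDescentCurve (W : Set E) (V : E → ℝ) (G : E → E) (ε : ℝ) (γ : ℝ → E) : Prop where
  isIntegralCurveOn : IsIntegralCurveOn γ (fun _ => G) (Icc 0 (V (γ 0) - ε)⁺)
  mem : ∀ t ∈ Icc 0 (V (γ 0) - ε)⁺, γ t ∈ W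
  apply_eq_sub : ∀ t ∈ Icc 0 (V (γ 0) - ε)⁺, V (γ t) = V (γ 0) - t

lemma IsUnitDescentCurve.mem_band (hγ : IsUnitDescentCurve W V G ε γ) {t : ℝ}
    (ht : t ∈ Ico 0 (V (γ 0) - ε)⁺) : γ t ∈ {x ∈ W | V x ∈ Icc ε (V (γ 0))} := by
  have hpos : 0 < V (γ 0) - ε := posPart_pos_iff.1 (ht.1.trans_lt ht.2)
  have ht' := Ico_subset_Icc_self ht
  rw [posPart_of_nonneg hpos.le] at ht
  exact ⟨hγ.mem t ht', by rw [hγ.apply_eq_sub t ht']; constructor <;> linarith [ht.1, ht.2]⟩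

lemma IsUnitDescentCurve.eqOn [FiniteDimensional ℝ E]
    (hγ₁ : IsUnitDescentCurve W V G ε γ₁) (hγ₂ : IsUnitDescentCurve W V G ε γ₂)
    (hband : IsCompact {x ∈ W | V x ∈ Icc ε (V (γ₁ 0))})
    (hG : ∀ x ∈ {x ∈ W | V x ∈ Icc ε (V (γ₁ 0))}, ContDiffAt ℝ 1 G x) (h0 : γ₁ 0 = γ₂ 0) :
    EqOn γ₁ γ₂ (Icc 0 (V (γ₁ 0) - ε)⁺) := by
  obtain ⟨K, -, f, hf, -, hfG⟩ := exists_lipschitzWith_bounded_eventuallyEq hband hG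
  have hGlip : LipschitzOnWith K G {x ∈ W | V x ∈ Icc ε (V (γ₁ 0))} := fun x hx y hy => by
    rw [← hfG.self_of_nhdsSet hx, ← hfG.self_of_nhdsSet hy]
    exact hf x y
  have hγ₂_curve := hγ₂.isIntegralCurveOn
  have hγ₂_band := fun t => hγ₂.mem_band (t := t)
  rw [← h0] at hγ₂_curve hγ₂_band
  exact ODE_solution_unique_of_mem_Icc_right (v := fun _ => G) (fun _ _ => hGlip)
    hγ₁.isIntegralCurveOn.continuousOn
    (fun _ => hasDerivWithinAt_Ici_of_isIntegralCurveOn_Icc hγ₁.isIntegralCurveOn)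
    (fun _ => hγ₁.mem_band) hγ₂_curve.continuousOn
    (fun _ => hasDerivWithinAt_Ici_of_isIntegralCurveOn_Icc hγ₂_curve) hγ₂_band h0

lemma isUnitDescentCurve_of_le (h0 : γ 0 ∈ W) (hε : V (γ 0) ≤ ε) :
    IsUnitDescentCurve W V G ε γ := by
  have hT : Icc 0 (V (γ 0) - ε)⁺ = {0} := by
    rw [posPart_eq_zero.2 (sub_nonpos.2 hε), Icc_self]
  refine ⟨?_, ?_, ?_⟩ <;> rw [hT]
  · exact fun t _ => HasFDerivWithinAt.of_subsingleton subsingleton_singleton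
  · rintro _ rfl
    exact h0
  · rintro _ rfl
    rw [sub_zero]

lemma isUnitDescentCurve_of_isIntegralCurveOn (hW : IsOpen W)
    (hband : IsClosed {x ∈ W | V x ∈ Icc ε (V (γ 0))})
    (hVG : ∀ᶠ x in 𝓝ˢ {x ∈ W | V x ∈ Icc ε (V (γ 0))}, fderiv ℝ V x (G x) = -1)
    (hfG : f =ᶠ[𝓝ˢ {x ∈ W | V x ∈ Icc ε (V (γ 0))}] G)
    (hγ : IsIntegralCurveOn γ (fun _ => f) (Icc 0 (V (γ 0) - ε)⁺)) (h0 : γ 0 ∈ W) :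
    IsUnitDescentCurve W V G ε γ := by
  rcases le_total (V (γ 0)) ε with hle | hle
  · exact isUnitDescentCurve_of_le h0 hle
  have hT : (V (γ 0) - ε)⁺ = V (γ 0) - ε := posPart_of_nonneg (sub_nonneg.2 hle)
  have hVf : ∀ᶠ x in 𝓝ˢ {x ∈ W | V x ∈ Icc ε (V (γ 0))}, fderiv ℝ V x (f x) = -1 := by
    filter_upwards [hVG, hfG] with x hx hfx
    rw [hfx, hx]
  have hlevel : ∀ t ∈ Icc 0 (V (γ 0) - ε)⁺, γ t ∈ W ∧ V (γ t) = V (γ 0) - t := by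
    rw [hT] at hγ ⊢
    exact mem_and_apply_eq_sub_of_isIntegralCurveOn hW (by rwa [sub_sub_cancel])
      (by rwa [sub_sub_cancel]) hγ h0
  refine ⟨fun t ht => ?_, fun t ht => (hlevel t ht).1, fun t ht => (hlevel t ht).2⟩
  have htB : γ t ∈ {x ∈ W | V x ∈ Icc ε (V (γ 0))} := by
    have htε : t ≤ V (γ 0) - ε := ht.2.trans_eq hT
    exact ⟨(hlevel t ht).1, by rw [(hlevel t ht).2]; constructor <;> linarith [ht.1]⟩
  simpa only [hfG.self_of_nhdsSet htB] using hγ t ht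

lemma exists_flow_isUnitDescentCurve [FiniteDimensional ℝ E] (hW : IsOpen W)
    (hband : ∀ R, IsCompact {x ∈ W | V x ∈ Icc ε R})
    (hG : IsUnitDescentFieldOn V G {x ∈ W | ε ≤ V x}) (R : ℝ) (x₀ : E) (r : ℝ≥0) :
    ∃ φ : E × ℝ → E, ContinuousOn φ (closedBall x₀ r ×ˢ Icc 0 (R - ε)⁺) ∧
      ∀ x ∈ W, V x ≤ R → x ∈ closedBall x₀ r →
        φ (x, 0) = x ∧ IsUnitDescentCurve W V G ε fun t => φ (x, t) := by
  have hsub : ∀ S, {x ∈ W | V x ∈ Icc ε S} ⊆ {x ∈ W | ε ≤ V x} := fun S x hx => ⟨hx.1, hx.2.1⟩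
  obtain ⟨K, M, f, hf, hM, hfG⟩ := exists_lipschitzWith_bounded_eventuallyEq (hband R)
    fun x hx => hG.contDiffAt x (hsub R hx)
  obtain ⟨φ, hφc, hφ⟩ := exists_flow_on_closedBall hf hM x₀ r ⟨(R - ε)⁺, posPart_nonneg _⟩
  refine ⟨φ, hφc, fun x hx hxR hxr => ?_⟩
  obtain ⟨h0, hcurve⟩ := hφ x hxr
  refine ⟨h0, isUnitDescentCurve_of_isIntegralCurveOn (f := f) hW (hband _).isClosed
    (hG.fderiv_apply.filter_mono (nhdsSet_mono (hsub _))) ?_ ?_ ?_⟩ <;> simp only [h0]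
  · exact hfG.filter_mono (nhdsSet_mono fun y hy => ⟨hy.1, hy.2.1, hy.2.2.trans hxR⟩)
  · exact hcurve.mono (Icc_subset_Icc_right (posPart_mono (sub_le_sub_right hxR ε)))
  · exact hx

lemma mul_posPart_mem_Icc {σ a : ℝ} (hσ : σ ∈ Icc (0 : ℝ) 1) : σ * a⁺ ∈ Icc 0 a⁺ :=
  ⟨mul_nonneg hσ.1 (posPart_nonneg a), mul_le_of_le_one_left (posPart_nonneg a) hσ.2⟩

/-- The deformation that runs the curve `γ y` from `y` to the level `ε` of `V` in unit time. -/
def descentDeformation (V : E → ℝ) (ε : ℝ) (γ : E → ℝ → E) (p : ℝ × E) : E :=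
  γ p.2 (p.1 * (V p.2 - ε)⁺)

lemma continuousOn_descentDeformation [FiniteDimensional ℝ E] {γ : E → ℝ → E} (hW : IsOpen W)
    (hV : ContinuousOn V W) (hband : ∀ R, IsCompact {x ∈ W | V x ∈ Icc ε R})
    (hG : IsUnitDescentFieldOn V G {x ∈ W | ε ≤ V x}) (h0 : ∀ x ∈ W, γ x 0 = x)
    (hγ : ∀ x ∈ W, IsUnitDescentCurve W V G ε (γ x)) :
    ContinuousOn (descentDeformation V ε γ) (Icc (0 : ℝ) 1 ×ˢ W) := by
  rintro ⟨σ, x⟩ ⟨hσ, hx⟩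
  obtain ⟨φ, hφc, hφ⟩ := exists_flow_isUnitDescentCurve hW hband hG (V x + 1) x 1
  set N := W ∩ V ⁻¹' Iio (V x + 1) ∩ ball x 1
  have hN_nhds : N ∈ 𝓝 x := ((hV.isOpen_inter_preimage hW isOpen_Iio).inter isOpen_ball).mem_nhds
    ⟨⟨hx, lt_add_one (V x)⟩, mem_ball_self one_pos⟩
  have hφN : ContinuousOn (descentDeformation V ε fun y t => φ (y, t)) (Icc (0 : ℝ) 1 ×ˢ N) := by
    have hVN : ContinuousOn (fun p : ℝ × E => V p.2) (Icc (0 : ℝ) 1 ×ˢ N) :=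
      hV.comp continuousOn_snd fun p hp => hp.2.1.1
    refine hφc.comp (continuousOn_snd.prodMk (continuousOn_fst.mul
      (continuous_posPart.comp_continuousOn (hVN.sub continuousOn_const)))) ?_
    rintro ⟨τ, y⟩ ⟨hτ, ⟨-, hyV⟩, hyx⟩
    exact ⟨ball_subset_closedBall hyx, Icc_subset_Icc_right
      (posPart_mono (sub_le_sub_right (mem_Iio.1 hyV).le ε)) (mul_posPart_mem_Icc hτ)⟩
  have heq : EqOn (descentDeformation V ε γ) (descentDeformation V ε fun y t => φ (y, t))
      (Icc (0 : ℝ) 1 ×ˢ N) := by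
    rintro ⟨τ, y⟩ ⟨hτ, ⟨hy, hyV⟩, hyx⟩
    obtain ⟨hφ0, hφy⟩ := hφ y hy (mem_Iio.1 hyV).le (ball_subset_closedBall hyx)
    have hunique := (hγ y hy).eqOn hφy (hband _)
      (fun z hz => hG.contDiffAt z ⟨hz.1, hz.2.1⟩) ((h0 y hy).trans hφ0.symm)
    rw [h0 y hy] at hunique
    exact hunique (mul_posPart_mem_Icc hτ)
  refine (hφN.congr heq (σ, x) ⟨hσ, mem_of_mem_nhds hN_nhds⟩).mono_of_mem_nhdsWithin ?_
  rw [nhdsWithin_prod_eq]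
  exact prod_mem_prod self_mem_nhdsWithin (mem_nhdsWithin_of_mem_nhds hN_nhds)

lemma isStrongDeformationRetract_of_isUnitDescentFieldOn [FiniteDimensional ℝ E] (hW : IsOpen W)
    (hV : ContinuousOn V W) (hband : ∀ R, IsCompact {x ∈ W | V x ∈ Icc ε R})
    (hG : IsUnitDescentFieldOn V G {x ∈ W | ε ≤ V x}) :
    IsStrongDeformationRetract {x ∈ W | V x ≤ ε} W := by
  have hexists : ∀ x : E, ∃ γ : ℝ → E, x ∈ W → γ 0 = x ∧ IsUnitDescentCurve W V G ε γ := by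
    intro x
    obtain ⟨φ, -, hφ⟩ := exists_flow_isUnitDescentCurve hW hband hG (V x) x 0
    exact ⟨fun t => φ (x, t), fun hx => hφ x hx le_rfl (mem_closedBall_self le_rfl)⟩
  choose γ hγ using hexists
  have h0 : ∀ x ∈ W, γ x 0 = x := fun x hx => (hγ x hx).1
  have hmem : ∀ σ ∈ Icc (0 : ℝ) 1, ∀ y ∈ W, descentDeformation V ε γ (σ, y) ∈ W :=
    fun σ hσ y hy => (hγ y hy).2.mem _ (by rw [h0 y hy]; exact mul_posPart_mem_Icc hσ)
  refine ⟨fun _ hx => hx.1, descentDeformation V ε γ,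
    continuousOn_descentDeformation hW hV hband hG h0 fun x hx => (hγ x hx).2, hmem,
    fun y hy => ?_, fun y hy => ⟨hmem 1 (right_mem_Icc.2 zero_le_one) y hy, ?_⟩,
    fun σ _ a ha => ?_⟩
  · simp only [descentDeformation, zero_mul, h0 y hy]
  · have hend := (hγ y hy).2.apply_eq_sub (V y - ε)⁺ (by simp [h0 y hy])
    rw [h0 y hy] at hend
    simp only [descentDeformation, one_mul, hend]
    linarith [le_posPart (V y - ε)]
  · simp only [descentDeformation, posPart_eq_zero.2 (sub_nonpos.2 ha.2), mul_zero, h0 a ha.1]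

end UnitDescent

section Gradient

open scoped Gradient

variable {E : Type*} [NormedAddCommGroup E] [InnerProductSpace ℝ E] [CompleteSpace E]
  {S : Set E} {V : E → ℝ} {x : E}

/-- The negative gradient of `V`, rescaled so that `V` decreases along it at unit speed; it takes
the junk value `0` at critical points. -/
noncomputable def unitDescentGradient (V : E → ℝ) (x : E) : E :=
  -((‖∇ V x‖ ^ 2)⁻¹ • ∇ V x)

lemma gradient_ne_zero_iff : ∇ V x ≠ 0 ↔ fderiv ℝ V x ≠ 0 := by
  rw [← toDual_gradient, map_ne_zero_iff _ (LinearIsometryEquiv.injective _)]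

lemma fderiv_apply_unitDescentGradient (hx : fderiv ℝ V x ≠ 0) :
    fderiv ℝ V x (unitDescentGradient V x) = -1 := by
  have hnorm : ‖∇ V x‖ ^ 2 ≠ 0 := pow_ne_zero 2 (norm_ne_zero_iff.2 (gradient_ne_zero_iff.2 hx))
  rw [← inner_gradient_left, unitDescentGradient, inner_neg_right, real_inner_smul_right,
    real_inner_self_eq_norm_sq, inv_mul_cancel₀ hnorm]

lemma contDiffAt_unitDescentGradient (hV : ContDiffAt ℝ 2 V x) (hx : fderiv ℝ V x ≠ 0) :
    ContDiffAt ℝ 1 (unitDescentGradient V) x := by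
  have hgrad : ContDiffAt ℝ 1 (∇ V) x :=
    (InnerProductSpace.toDual ℝ E).symm.contDiff.contDiffAt.comp x
      (hV.fderiv_right one_add_one_eq_two.le)
  have hnorm : ‖∇ V x‖ ^ 2 ≠ 0 := pow_ne_zero 2 (norm_ne_zero_iff.2 (gradient_ne_zero_iff.2 hx))
  exact (((hgrad.norm_sq ℝ).inv hnorm).smul hgrad).neg

lemma isUnitDescentFieldOn_unitDescentGradient (hV : ∀ x ∈ S, ContDiffAt ℝ 2 V x)
    (hcrit : ∀ x ∈ S, fderiv ℝ V x ≠ 0) :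
    IsUnitDescentFieldOn V (unitDescentGradient V) S where
  contDiffAt x hx := contDiffAt_unitDescentGradient (hV x hx) (hcrit x hx)
  fderiv_apply := eventually_nhdsSet_iff_forall.2 fun x hx =>
    (((hV x hx).fderiv_right one_add_one_eq_two.le).continuousAt.eventually_ne (hcrit x hx)).mono
      fun _ => fderiv_apply_unitDescentGradient

end Gradient

theorem sublevel_is_deformation_retract_general {E : Type*} [NormedAddCommGroup E]
    [InnerProductSpace ℝ E] [FiniteDimensional ℝ E] {W : Set E} {V : E → ℝ} {ε : ℝ}
    (hW : IsOpen W) (hV : ContDiffOn ℝ 2 V W) (hband : ∀ R, IsCompact {x ∈ W | V x ∈ Icc ε R})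
    (hcrit : ∀ x ∈ W, ε ≤ V x → fderiv ℝ V x ≠ 0) :
    IsStrongDeformationRetract {x ∈ W | V x ≤ ε} W := by
  have := FiniteDimensional.complete ℝ E
  exact isStrongDeformationRetract_of_isUnitDescentFieldOn hW hV.continuousOn hband <|
    isUnitDescentFieldOn_unitDescentGradient
      (fun _ hx => hV.contDiffAt (hW.mem_nhds hx.1)) fun x hx => hcrit x hx.1 hx.2

lemma RadiallyUnbounded.isCompact_band {W : Set (X m)} {V : X m → ℝ} (hV : RadiallyUnbounded W V)
    (hVc : ContinuousOn V W) (a b : ℝ) : IsCompact {x ∈ W | V x ∈ Icc a b} := by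
  obtain ⟨K, hKW, hK, hVK⟩ := hV (max b 1) (by positivity)
  have hband : {x ∈ W | V x ∈ Icc a b} = K ∩ V ⁻¹' Icc a b := by
    refine Subset.antisymm (fun x hx => ⟨by_contra fun hxK => ?_, hx.2⟩)
      fun x hx => ⟨hKW hx.1, hx.2⟩
    exact (hVK x ⟨hx.1, hxK⟩).not_ge (hx.2.2.trans (le_max_left b 1))
  rw [hband]
  exact hK.of_isClosed_subset
    ((hVc.mono hKW).preimage_isClosed_of_isClosed hK.isClosed isClosed_Icc) inter_subset_left

lemma ne_zero_of_forall_apply_le_neg {E : Type*} [AddCommGroup E] [Module ℝ E]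
    [TopologicalSpace E] {ℓ : E →L[ℝ] ℝ} {S : Set E} {c : ℝ} (hS : S.Nonempty) (hc : 0 < c)
    (hℓ : ∀ v ∈ S, ℓ v ≤ -c) : ℓ ≠ 0 := by
  rintro rfl
  obtain ⟨v, hv⟩ := hS
  exact (neg_lt_zero.2 hc).not_ge (hℓ v hv)

/-- from the proof of Proposition 5.2: the sublevel set
`V_ε = {x ∈ W : V x ≤ ε}` of a smooth radially unbounded Lyapunov function of `𝒜`
on `W` is a strong deformation retract of `W`, for every `ε > 0`. -/
theorem sublevel_is_deformation_retract {m : ℕ} (F : X m → Set (X m))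
    (hF : Standing F) (𝒜 : Set (X m)) (h𝒜 : IsAttractor F 𝒜)
    (W : Set (X m)) (hWo : IsOpen W) (hW : IsAttractorNbhd F 𝒜 W)
    (V w : X m → ℝ)
    (hV : ContDiffOn ℝ (⊤ : ℕ∞) V W) (hru : RadiallyUnbounded W V)
    (hV0 : ∀ x ∈ 𝒜, V x = 0)
    (hwc : ContinuousOn w W) (hwn : ∀ x ∈ W, 0 ≤ w x) (hwa : ∀ x ∈ 𝒜, w x = 0)
    (hwp : ∀ x ∈ W \ 𝒜, 0 < w x)
    (hd : ∀ x ∈ W, ∀ v ∈ F x, fderiv ℝ V x v ≤ -w x) :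
    ∀ ε > (0:ℝ), IsSDR {x ∈ W | V x ≤ ε} W := by
  refine fun ε hε => sublevel_is_deformation_retract_general hWo
    (hV.of_le (WithTop.coe_le_coe.2 le_top)) (hru.isCompact_band hV.continuousOn ε)
    fun x hx hεx => ?_
  have hx𝒜 : x ∉ 𝒜 := fun h => (hε.trans_le hεx).ne' (hV0 x h)
  exact ne_zero_of_forall_apply_le_neg (hF.1 x).1 (hwp x ⟨hx, hx𝒜⟩) (hd x hx)

end DI
end

section
/- Let 𝒜 be an attractor with attraction basin Ω = Ω(𝒜), let ℳ = {M₁,…,M_l} be a Morse decomposition of 𝒜 with 𝒟 = ∪_k M_k, and let V ∈ C^∞(Ω) be a radially unbounded strict Morse–Lyapunov function of ℳ satisfying max_{v ∈ F(x)} ∇V(x)·v ≤ −w(x) on Ω, where w ∈ C(Ω) is nonnegative with w = 0 on 𝒟 and w > 0 on Ω ∖ 𝒟. If b ∈ ℝ satisfies V(x) < b for all x ∈ 𝒜, then the sublevel set V_b = {x ∈ Ω : V(x) ≤ b} is a strong deformation retract of Ω. -/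
open Set Filter Topology MeasureTheory Metric Pointwise

namespace DI

variable {m : ℕ}

/-!
Solutions are characterised by their slopes: on a short interval, `(γ t - γ s) / (t - s)` lies in
the closed convex hull of nearby values of `F`. This condition survives uniform limits, which makes
reachable sets upper semicontinuous. Since `V` does not increase along solutions, its compact
sublevel sets trap them, so the basin is open.

Above the level `b` the function `V` has no critical points. Following `-∇V` for a continuously
chosen Armijo step size pushes every point down without moving the sublevel set. Near any point
finitely many such pushes reach level `b`, and performing them one after another up to a
continuously chosen stopping time is the deformation retraction.
-/

/-- The closed convex hull of the velocities that `F` offers at the points of `S`. -/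
def valueHull {E : Type*} [NormedAddCommGroup E] [NormedSpace ℝ E] (F : E → Set E) (S : Set E) :
    Set E :=
  closedConvexHull ℝ (⋃ y ∈ S, F y)

/-- `γ` is an `ε`-approximate solution of `x' ∈ F x` on `I`: its difference quotients are limits of
convex combinations of velocities offered within distance `ε` of the trajectory. For `ε = 0` and
`F` as in (H1)–(H2) this is an integral-free description of solutions, stable under limits and
concatenation. -/
def IsApproxSolOn {E : Type*} [NormedAddCommGroup E] [NormedSpace ℝ E] (F : E → Set E) (ε : ℝ)
    (γ : ℝ → E) (I : Set ℝ) : Prop :=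
  ContinuousOn γ I ∧
    ∀ s ∈ I, ∀ t ∈ I, s < t → slope γ s t ∈ valueHull F (cthickening ε (γ '' Icc s t))

section ValueHull

variable {E : Type*} [NormedAddCommGroup E] [NormedSpace ℝ E] {F : E → Set E} {S T C : Set E}

theorem convex_valueHull : Convex ℝ (valueHull F S) := convex_closedConvexHull

theorem valueHull_mono (h : S ⊆ T) : valueHull F S ⊆ valueHull F T :=
  (closedConvexHull ℝ).monotone (biUnion_subset_biUnion_left h)

theorem subset_valueHull {x : E} (hx : x ∈ S) : F x ⊆ valueHull F S :=
  (subset_biUnion_of_mem hx).trans subset_closedConvexHull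

theorem valueHull_subset (hC : Convex ℝ C) (hCc : IsClosed C) (h : ∀ y ∈ S, F y ⊆ C) :
    valueHull F S ⊆ C :=
  closedConvexHull_min (iUnion₂_subset h) hC hCc

end ValueHull

namespace IsApproxSolOn

variable {E : Type*} [NormedAddCommGroup E] [NormedSpace ℝ E] {F : E → Set E} {ε : ℝ}
  {γ γ' : ℝ → E} {I J : Set ℝ} {a b c : ℝ}

theorem mono (h : IsApproxSolOn F ε γ I) (hJ : J ⊆ I) : IsApproxSolOn F ε γ J :=
  ⟨h.1.mono hJ, fun s hs t ht => h.2 s (hJ hs) t (hJ ht)⟩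

theorem congr (h : IsApproxSolOn F ε γ (Icc a b)) (he : EqOn γ' γ (Icc a b)) :
    IsApproxSolOn F ε γ' (Icc a b) := by
  refine ⟨h.1.congr he, fun s hs t ht hst => ?_⟩
  rw [(he.mono (Icc_subset_Icc hs.1 ht.2)).image_eq, slope_def_module, he hs, he ht,
    ← slope_def_module]
  exact h.2 s hs t ht hst

theorem comp_const_add (h : IsApproxSolOn F ε γ (Icc a b)) (c : ℝ) :
    IsApproxSolOn F ε (fun t => γ (c + t)) (Icc (a - c) (b - c)) := by
  have hmaps : MapsTo (c + ·) (Icc (a - c) (b - c)) (Icc a b) := fun t ht =>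
    ⟨by linarith [ht.1], by linarith [ht.2]⟩
  refine ⟨h.1.comp (by fun_prop) hmaps, fun s hs t ht hst => ?_⟩
  have key := h.2 _ (hmaps hs) _ (hmaps ht) (by linarith)
  rwa [← image_const_add_Icc, image_image, slope_def_module, add_sub_add_left_eq_sub] at key

theorem Icc_union_Icc (h₁ : IsApproxSolOn F ε γ (Icc a b)) (h₂ : IsApproxSolOn F ε γ (Icc b c)) :
    IsApproxSolOn F ε γ (Icc a b ∪ Icc b c) := by
  refine ⟨h₁.1.union_of_isClosed h₂.1 isClosed_Icc isClosed_Icc, ?_⟩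
  rintro s (hs | hs) t (ht | ht) hst
  · exact h₁.2 s hs t ht hst
  · rcases hs.2.eq_or_lt with rfl | hsb
    · exact h₂.2 s ⟨le_rfl, hst.le.trans ht.2⟩ t ht hst
    rcases ht.1.eq_or_lt with rfl | hbt
    · exact h₁.2 s hs b ⟨hs.1.trans hs.2, le_rfl⟩ hst
    have hsub {u v : ℝ} (hu : s ≤ u) (hv : v ≤ t) :
        valueHull F (cthickening ε (γ '' Icc u v)) ⊆ valueHull F (cthickening ε (γ '' Icc s t)) :=
      valueHull_mono (cthickening_subset_of_subset _ (image_mono (Icc_subset_Icc hu hv)))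
    rw [← lineMap_slope_slope_sub_div_sub γ s b t hst.ne]
    exact convex_valueHull.lineMap_mem
      (hsub le_rfl hbt.le (h₁.2 s hs b ⟨hs.1.trans hs.2, le_rfl⟩ hsb))
      (hsub hsb.le le_rfl (h₂.2 b ⟨le_rfl, ht.1.trans ht.2⟩ t ht hbt))
      ⟨div_nonneg (by linarith) (by linarith), div_le_one_of_le₀ (by linarith) (by linarith)⟩
  · exact absurd (ht.2.trans hs.1) hst.not_ge
  · exact h₂.2 s hs t ht hst

theorem exists_concat {T₁ T₂ : ℝ} {γ₁ γ₂ : ℝ → E} (hT₁ : 0 ≤ T₁) (hT₂ : 0 ≤ T₂)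
    (h₁ : IsApproxSolOn F ε γ₁ (Icc 0 T₁)) (h₂ : IsApproxSolOn F ε γ₂ (Icc 0 T₂))
    (he : γ₁ T₁ = γ₂ 0) :
    ∃ γ, IsApproxSolOn F ε γ (Icc 0 (T₁ + T₂)) ∧ (∀ t ≤ T₁, γ t = γ₁ t) ∧
      ∀ t ≥ 0, γ (T₁ + t) = γ₂ t := by
  let γ : ℝ → E := fun t => if t ≤ T₁ then γ₁ t else γ₂ (t - T₁)
  have hγ₁ (t : ℝ) (ht : t ≤ T₁) : γ t = γ₁ t := if_pos ht
  have hγ₂ (t : ℝ) (ht : 0 ≤ t) : γ (T₁ + t) = γ₂ t := by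
    rcases ht.eq_or_lt with rfl | ht
    · rw [add_zero, hγ₁ T₁ le_rfl, he]
    · simp [γ, ht]
  have hshift : IsApproxSolOn F ε (fun t => γ₂ (-T₁ + t)) (Icc T₁ (T₁ + T₂)) := by
    simpa [add_comm] using h₂.comp_const_add (-T₁)
  refine ⟨γ, ?_, hγ₁, hγ₂⟩
  rw [← Icc_union_Icc_eq_Icc hT₁ (le_add_of_nonneg_right hT₂)]
  refine (h₁.congr fun t ht => hγ₁ t ht.2).Icc_union_Icc (hshift.congr fun t ht => ?_)
  simpa using hγ₂ (-T₁ + t) (by linarith [ht.1])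

theorem lipschitzOnWith {K : Set E} {C : NNReal} (h : IsApproxSolOn F ε γ I)
    (hI : I.OrdConnected) (hε : ε ≤ 1) (hK : MapsTo γ I K)
    (hC : ∀ x ∈ cthickening 1 K, F x ⊆ closedBall 0 C) : LipschitzOnWith C γ I := by
  have key {s t : ℝ} (hs : s ∈ I) (ht : t ∈ I) (hst : s < t) : dist (γ s) (γ t) ≤ C * dist s t := by
    have hsub : cthickening ε (γ '' Icc s t) ⊆ cthickening 1 K :=
      (cthickening_mono hε _).trans
        (cthickening_subset_of_subset _ ((hK.mono_left (hI.out hs ht)).image_subset))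
    have hslope := valueHull_subset (convex_closedBall 0 (C : ℝ)) isClosed_closedBall
      (fun y hy => hC y (hsub hy)) (h.2 s hs t ht hst)
    rw [dist_comm, dist_eq_norm, ← vsub_eq_sub, ← sub_smul_slope, norm_smul, mul_comm,
      dist_comm s t, Real.dist_eq, Real.norm_eq_abs]
    exact mul_le_mul_of_nonneg_right (mem_closedBall_zero_iff.1 hslope) (abs_nonneg _)
  refine LipschitzOnWith.of_dist_le_mul fun s hs t ht => ?_
  rcases lt_trichotomy s t with hst | rfl | hst
  · exact key hs ht hst
  · simp
  · simpa only [dist_comm] using key ht hs hst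

end IsApproxSolOn

theorem isApproxSolOn_add_smul {E : Type*} [NormedAddCommGroup E] [NormedSpace ℝ E]
    {F : E → Set E} {x v : E} {ε h : ℝ} (hv : v ∈ F x) (hε : ‖v‖ * h ≤ ε) :
    IsApproxSolOn F ε (fun t => x + t • v) (Icc 0 h) := by
  refine ⟨by fun_prop, fun s hs t _ hst => ?_⟩
  have hslope : slope (fun t : ℝ => x + t • v) s t = v := by
    rw [slope_def_module, add_sub_add_left_eq_sub, ← sub_smul, inv_smul_smul₀ (sub_pos.2 hst).ne']
  have hdist : dist x (x + s • v) ≤ ε := by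
    rw [dist_self_add_right, norm_smul, Real.norm_of_nonneg hs.1, mul_comm]
    exact (mul_le_mul_of_nonneg_left hs.2 (norm_nonneg v)).trans hε
  rw [hslope]
  exact subset_valueHull (mem_cthickening_of_dist_le x _ ε _
    (mem_image_of_mem _ (left_mem_Icc.2 hst.le)) hdist) hv

theorem Standing.exists_forall_subset_closedBall {F : X m → Set (X m)} (hF : Standing F)
    {K : Set (X m)} (hK : IsCompact K) : ∃ C : NNReal, 0 < C ∧ ∀ x ∈ K, F x ⊆ closedBall 0 C := by
  refine hK.induction_on (p := fun K => ∃ C : NNReal, 0 < C ∧ ∀ x ∈ K, F x ⊆ closedBall 0 C)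
    ⟨1, one_pos, by simp⟩ (fun s t hst ⟨C, hC, h⟩ => ⟨C, hC, fun x hx => h x (hst hx)⟩) ?_ ?_
  · rintro s t ⟨C, hC, hs⟩ ⟨C', -, ht⟩
    refine ⟨max C C', lt_max_of_lt_left hC, ?_⟩
    rintro x (hx | hx)
    · exact (hs x hx).trans (closedBall_subset_closedBall (le_max_left C C'))
    · exact (ht x hx).trans (closedBall_subset_closedBall (le_max_right C C'))
  · intro x _
    obtain ⟨δ, hδ, hus⟩ := hF.2 x 1 one_pos
    obtain ⟨C, hC, hFx⟩ :=
      ((hF.1 x).2.2.isBounded.thickening (δ := 1)).exists_pos_norm_le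
    exact ⟨ball x δ, mem_nhdsWithin_of_mem_nhds (ball_mem_nhds x hδ), ⟨C, hC.le⟩, hC,
      fun y hy v hv => mem_closedBall_zero_iff.2 (hFx v (hus y hy hv))⟩

theorem IsSolOn.isApproxSolOn {F : X m → Set (X m)} {γ : ℝ → X m} {a b : ℝ}
    (h : IsSolOn F γ (Icc a b)) : IsApproxSolOn F 0 γ (Icc a b) := by
  obtain ⟨g, hint, hg⟩ := h
  refine ⟨?_, fun s hs t ht hst => ?_⟩
  · rcases le_or_gt a b with hab | hab
    · have ha : a ∈ Icc a b := left_mem_Icc.2 hab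
      have hcont := intervalIntegral.continuousOn_primitive_interval'
        (hint a ha b (right_mem_Icc.2 hab)).1 left_mem_uIcc
      rw [uIcc_of_le hab] at hcont
      exact (continuousOn_const.add hcont).congr fun t ht => (hint a ha t ht).2
    · simp [Icc_eq_empty_of_lt hab]
  · obtain ⟨hgint, hγ⟩ := hint s hs t ht
    have hgF : ∀ᵐ u ∂volume.restrict (Ioc s t),
        g u ∈ valueHull F (cthickening 0 (γ '' Icc s t)) := by
      filter_upwards [ae_restrict_of_ae_restrict_of_subset
        (Ioc_subset_Icc_self.trans (Icc_subset_Icc hs.1 ht.2)) hg,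
        ae_restrict_mem measurableSet_Ioc] with u hu hust
      exact subset_valueHull (self_subset_cthickening _
        (mem_image_of_mem γ (Ioc_subset_Icc_self hust))) hu
    have havg : slope γ s t = ⨍ u in Ioc s t, g u := by
      rw [slope_def_module, hγ, add_sub_cancel_left, setAverage_eq,
        Real.volume_real_Ioc_of_le hst.le, intervalIntegral.integral_of_le hst.le]
    rw [havg]
    exact convex_valueHull.set_average_mem isClosed_closedConvexHull (by simp [hst]) (by simp) hgF
      ((intervalIntegrable_iff_integrableOn_Ioc_of_le hst.le).1 hgint)

theorem intervalIntegrable_deriv_of_lipschitzWith {E : Type*} [NormedAddCommGroup E]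
    [NormedSpace ℝ E] [CompleteSpace E] [SecondCountableTopology E] {γ : ℝ → E} {C : NNReal}
    (hγ : LipschitzWith C γ) (a b : ℝ) : IntervalIntegrable (deriv γ) volume a b := by
  borelize E
  exact intervalIntegrable_iff.2 (Measure.integrableOn_of_bounded (M := C) (by simp)
    (measurable_deriv γ).aestronglyMeasurable
    (Eventually.of_forall fun _ => norm_deriv_le_of_lipschitz hγ))

theorem integral_deriv_eq_sub_of_lipschitzWith {E : Type*} [NormedAddCommGroup E]
    [NormedSpace ℝ E] [FiniteDimensional ℝ E] {γ : ℝ → E} {C : NNReal} (hγ : LipschitzWith C γ)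
    (a b : ℝ) : ∫ u in a..b, deriv γ u = γ b - γ a := by
  have : CompleteSpace E := FiniteDimensional.complete ℝ E
  have : ProperSpace E := FiniteDimensional.proper ℝ E
  refine (SeparatingDual.eq_iff_forall_dual_eq (R := ℝ)).2 fun L => ?_
  have hint := intervalIntegrable_deriv_of_lipschitzWith hγ a b
  have hL : LipschitzWith (‖L‖₊ * C) fun t => L (γ t) := L.lipschitz.comp hγ
  calc L (∫ u in a..b, deriv γ u) = ∫ u in a..b, L (deriv γ u) :=
        (L.intervalIntegral_comp_comm hint).symm
    _ = ∫ u in a..b, deriv (fun t => L (γ t)) u := by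
        refine intervalIntegral.integral_congr_ae ?_
        filter_upwards [hγ.ae_differentiableAt_real] with u hu _
        exact ((L.hasFDerivAt.comp_hasDerivAt u hu.hasDerivAt).deriv).symm
    _ = L (γ b - γ a) := by
        have hLip := hL.lipschitzOnWith (s := uIcc a b)
        rw [hLip.absolutelyContinuousOnInterval.integral_deriv_eq_sub, map_sub]

theorem Standing.mem_of_forall_mem_valueHull {F : X m → Set (X m)} (hF : Standing F) {x v : X m}
    (h : ∀ δ > 0, v ∈ valueHull F (closedBall x δ)) : v ∈ F x := by
  obtain ⟨-, hconv, hcomp⟩ := hF.1 x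
  rw [← hcomp.isClosed.closure_eq, closure_eq_iInter_cthickening, mem_iInter₂]
  intro ε hε
  obtain ⟨δ, hδ, hus⟩ := hF.2 x ε hε
  refine valueHull_subset (hconv.cthickening ε) isClosed_cthickening (fun y hy => ?_)
    (h (δ / 2) (half_pos hδ))
  exact (hus y ((mem_closedBall.1 hy).trans_lt (half_lt_self hδ))).trans
    (thickening_subset_cthickening ε (F x))

theorem Standing.isSolOn_of_slope_mem_valueHull {F : X m → Set (X m)} (hF : Standing F)
    {γ : ℝ → X m} {C : NNReal} (hγ : LipschitzWith C γ) {a b : ℝ}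
    (h : ∀ t ∈ Ioo a b, ∀ δ > 0, ∀ᶠ s in 𝓝[>] t, slope γ t s ∈ valueHull F (closedBall (γ t) δ)) :
    IsSolOn F γ (Icc a b) := by
  refine ⟨deriv γ, fun s _ t _ => ⟨intervalIntegrable_deriv_of_lipschitzWith hγ s t, ?_⟩, ?_⟩
  · rw [integral_deriv_eq_sub_of_lipschitzWith hγ, add_sub_cancel]
  · rw [← Measure.restrict_congr_set Ioo_ae_eq_Icc, ae_restrict_iff' measurableSet_Ioo]
    filter_upwards [hγ.ae_differentiableAt_real] with t hdiff ht
    refine hF.mem_of_forall_mem_valueHull fun δ hδ => isClosed_closedConvexHull.mem_of_tendsto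
      (hasDerivAt_iff_tendsto_slope.1 hdiff.hasDerivAt |>.mono_left ?_) (h t ht δ hδ)
    exact nhdsWithin_mono t fun s hs => (ne_of_gt hs)

theorem eventually_cthickening_image_Icc_subset_closedBall {ι : Type*} {l : Filter ι}
    {E : Type*} [NormedAddCommGroup E] [NormedSpace ℝ E] {q : ι → ℝ → E} {C : NNReal}
    (hq : ∀ i, LipschitzWith C (q i)) {ε : ι → ℝ} (hε : Tendsto ε l (𝓝 0)) {s t δ : ℝ} {x : E}
    (hδ : 0 < δ) (hx : Tendsto (fun i => q i t) l (𝓝 x)) (hst : C * (s - t) ≤ δ) :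
    ∀ᶠ i in l, cthickening (ε i) (q i '' Icc t s) ⊆ closedBall x (δ + (δ + δ)) := by
  filter_upwards [hε.eventually_le_const hδ, hx.eventually (closedBall_mem_nhds x hδ)]
    with i hεi hxi
  have himage : q i '' Icc t s ⊆ closedBall x (δ + δ) := by
    rintro _ ⟨u, hu, rfl⟩
    calc dist (q i u) x ≤ dist (q i u) (q i t) + dist (q i t) x := dist_triangle _ _ _
      _ ≤ C * (s - t) + δ := by
        refine add_le_add (((hq i).dist_le_mul u t).trans ?_) hxi
        rw [Real.dist_eq, abs_of_nonneg (sub_nonneg.2 hu.1)]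
        exact mul_le_mul_of_nonneg_left (by linarith [hu.2]) C.2
      _ ≤ δ + δ := by linarith
  calc cthickening (ε i) (q i '' Icc t s) ⊆ cthickening δ (closedBall x (δ + δ)) :=
        (cthickening_mono hεi _).trans (cthickening_subset_of_subset δ himage)
    _ = closedBall x (δ + (δ + δ)) := cthickening_closedBall hδ.le (by positivity) x

theorem Standing.isSolOn_of_tendsto {F : X m → Set (X m)} (hF : Standing F) {ι : Type*}
    {l : Filter ι} [l.NeBot] {q : ι → ℝ → X m} {C : NNReal} (hq : ∀ i, LipschitzWith C (q i))
    {ε t : ι → ℝ} (hε : Tendsto ε l (𝓝 0)) {τ : ℝ} (ht : Tendsto t l (𝓝 τ))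
    (hsol : ∀ i, IsApproxSolOn F (ε i) (q i) (Icc 0 (t i))) {γ : ℝ → X m}
    (hγ : Tendsto q l (𝓝 γ)) : IsSolOn F γ (Icc 0 τ) := by
  have hlip : LipschitzWith C γ :=
    (isClosed_setOfPred_lipschitzWith C).mem_of_tendsto hγ (Eventually.of_forall hq)
  rw [tendsto_pi_nhds] at hγ
  refine hF.isSolOn_of_slope_mem_valueHull hlip fun r hr δ hδ => ?_
  have hnear : ∀ᶠ s in 𝓝[>] r, C * (s - r) < δ / 3 := by
    refine (Continuous.tendsto' (by fun_prop) r 0 (by simp)).mono_left nhdsWithin_le_nhds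
      |>.eventually_lt_const (by positivity)
  filter_upwards [hnear, Ioo_mem_nhdsGT hr.2] with s hs hrs
  refine isClosed_closedConvexHull.mem_of_tendsto (f := fun i => slope (q i) r s) (b := l) ?_ ?_
  · simpa only [slope_def_module] using ((hγ s).sub (hγ r)).const_smul (s - r)⁻¹
  filter_upwards [ht.eventually_const_lt hrs.2, eventually_cthickening_image_Icc_subset_closedBall
    hq hε (by positivity : 0 < δ / 3) (hγ r) hs.le] with i hi hsub
  rw [show δ / 3 + (δ / 3 + δ / 3) = δ by ring] at hsub
  exact valueHull_mono hsub ((hsol i).2 r ⟨hr.1.le, (hrs.1.trans hi).le⟩ s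
    ⟨(hr.1.trans hrs.1).le, hi.le⟩ hrs.1)

/- The trajectories are frozen outside `[0, t i]`, which makes them equi-Lipschitz on `ℝ`, so that
pointwise limits along an ultrafilter replace the Arzelà–Ascoli theorem. -/
theorem Standing.exists_tendsto_mem_reach {F : X m → Set (X m)} (hF : Standing F) {ι : Type*}
    (𝒰 : Ultrafilter ι) {N : Set (X m)} (hN : IsCompact N) {a b : ℝ} (ha : 0 ≤ a) {ε t : ι → ℝ}
    {γ : ι → ℝ → X m} (hε : Tendsto ε 𝒰 (𝓝 0)) (hε₁ : ∀ i, ε i ≤ 1) (ht : ∀ i, t i ∈ Icc a b)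
    (hγ : ∀ i, IsApproxSolOn F (ε i) (γ i) (Icc 0 (t i))) (hγN : ∀ i, MapsTo (γ i) (Icc 0 (t i)) N)
    {x : X m} (hx : Tendsto (fun i => γ i 0) 𝒰 (𝓝 x)) :
    ∃ τ ∈ Icc a b, ∃ y ∈ reach F τ x, Tendsto (fun i => γ i (t i)) 𝒰 (𝓝 y) := by
  obtain ⟨C, -, hC⟩ := hF.exists_forall_subset_closedBall (hN.cthickening (r := 1))
  have ht₀ (i : ι) : 0 ≤ t i := ha.trans (ht i).1
  let q (i : ι) : ℝ → X m := fun s => γ i (projIcc 0 (t i) (ht₀ i) s)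
  have hqγ (i : ι) : EqOn (q i) (γ i) (Icc 0 (t i)) := fun s hs => by
    simp only [q, projIcc_of_mem (ht₀ i) hs]
  have hqlip (i : ι) : LipschitzWith C (q i) := by
    rw [← mul_one C]
    exact ((hγ i).lipschitzOnWith ordConnected_Icc (hε₁ i) (hγN i) hC).to_restrict.comp
      (LipschitzWith.projIcc (ht₀ i))
  obtain ⟨τ, hτ, htτ⟩ := isCompact_Icc.ultrafilter_le_nhds' (𝒰.map t)
    (Eventually.of_forall ht : ∀ᶠ i in (𝒰 : Filter ι), t i ∈ Icc a b)
  have hlim (s : ℝ) : ∃ y, Tendsto (fun i => q i s) 𝒰 (𝓝 y) := by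
    obtain ⟨y, -, hy⟩ := hN.ultrafilter_le_nhds' (𝒰.map fun i => q i s)
      (Eventually.of_forall fun i => hγN i (projIcc 0 (t i) (ht₀ i) s).2 :
        ∀ᶠ i in (𝒰 : Filter ι), q i s ∈ N)
    exact ⟨y, hy⟩
  choose γ' hγ' using hlim
  have hsol : IsSolOn F γ' (Icc 0 τ) :=
    hF.isSolOn_of_tendsto hqlip hε htτ (fun i => (hγ i).congr (hqγ i)) (tendsto_pi_nhds.2 hγ')
  have hx' : γ' 0 = x := tendsto_nhds_unique (hγ' 0) <|
    hx.congr fun i => (hqγ i (left_mem_Icc.2 (ht₀ i))).symm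
  refine ⟨τ, hτ, γ' τ, ⟨γ', hsol, hx', rfl⟩, ?_⟩
  have hdist : Tendsto (fun i => dist (q i τ) (γ i (t i))) 𝒰 (𝓝 0) := by
    refine squeeze_zero (fun _ => dist_nonneg) (fun i => ?_)
      (by simpa using (tendsto_const_nhds (x := τ).dist htτ).const_mul (C : ℝ))
    rw [← hqγ i (right_mem_Icc.2 (ht₀ i))]
    exact (hqlip i).dist_le_mul τ (t i)
  exact (tendsto_iff_of_dist hdist).1 (hγ' τ)

theorem IsSolOn.congr {F : X m → Set (X m)} {γ γ' : ℝ → X m} {I : Set ℝ} (h : IsSolOn F γ I)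
    (hI : MeasurableSet I) (he : EqOn γ' γ I) : IsSolOn F γ' I := by
  obtain ⟨g, hint, hg⟩ := h
  refine ⟨g, fun s hs t ht => ⟨(hint s hs t ht).1, ?_⟩, ?_⟩
  · rw [he hs, he ht]
    exact (hint s hs t ht).2
  · filter_upwards [hg, ae_restrict_mem hI] with u hu hI
    rwa [he hI]

theorem IsSolOn.mono {F : X m → Set (X m)} {γ : ℝ → X m} {I J : Set ℝ} (h : IsSolOn F γ I)
    (hJ : J ⊆ I) : IsSolOn F γ J := by
  obtain ⟨g, hint, hg⟩ := h
  exact ⟨g, fun s hs t ht => hint s (hJ hs) t (hJ ht), ae_restrict_of_ae_restrict_of_subset hJ hg⟩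

theorem IsApproxSolOn.isSolOn {F : X m → Set (X m)} {γ : ℝ → X m} {T : ℝ}
    (h : IsApproxSolOn F 0 γ (Icc 0 T)) (hF : Standing F) (hT : 0 ≤ T) :
    IsSolOn F γ (Icc 0 T) := by
  obtain ⟨C, -, hC⟩ := hF.exists_forall_subset_closedBall
    ((isCompact_Icc.image_of_continuousOn h.1).cthickening (r := 1))
  have hlip := h.lipschitzOnWith ordConnected_Icc zero_le_one (mapsTo_image γ _) hC
  have heq : EqOn (fun s => γ (projIcc 0 T hT s)) γ (Icc 0 T) := fun s hs => by
    simp only [projIcc_of_mem hT hs]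
  exact (hF.isSolOn_of_tendsto (l := pure ())
    (fun _ => hlip.to_restrict.comp (LipschitzWith.projIcc hT)) tendsto_const_nhds
    tendsto_const_nhds (fun _ => h.congr heq) tendsto_const_nhds).congr measurableSet_Icc heq.symm

theorem Standing.exists_isApproxSolOn {F : X m → Set (X m)} (hF : Standing F) {x : X m}
    {C : NNReal} {h ε : ℝ} (hC : ∀ y ∈ closedBall x 1, F y ⊆ closedBall 0 C) (hh : 0 ≤ h)
    (hε : C * h ≤ ε) (k : ℕ) (hk : C * (k * h) ≤ 1) :
    ∃ γ : ℝ → X m, γ 0 = x ∧ IsApproxSolOn F ε γ (Icc 0 (k * h)) ∧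
      ∀ t ∈ Icc 0 (k * h), dist (γ t) x ≤ C * t := by
  induction k with
  | zero =>
    have hzero : Icc (0 : ℝ) ((0 : ℕ) * h) = {0} := by simp
    rw [hzero]
    refine ⟨fun _ => x, rfl, ⟨continuousOn_const, ?_⟩, by simp⟩
    rintro s rfl t rfl hst
    exact absurd hst (lt_irrefl _)
  | succ k ih =>
    have hkh : 0 ≤ k * h := by positivity
    have hsucc : ((k + 1 : ℕ) : ℝ) * h = k * h + h := by push_cast; ring
    rw [hsucc] at hk ⊢
    have hCk : C * (k * h) ≤ 1 := (by gcongr; linarith : C * (k * h) ≤ C * (k * h + h)).trans hk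
    obtain ⟨γ₁, h₀, hγ₁, hdist⟩ := ih hCk
    obtain ⟨v, hv⟩ := (hF.1 (γ₁ (k * h))).1
    have hend := hdist _ (right_mem_Icc.2 hkh)
    have hvC : ‖v‖ ≤ C := mem_closedBall_zero_iff.1
      (hC _ (mem_closedBall.2 (hend.trans hCk)) hv)
    obtain ⟨γ, hγ, hleft, hright⟩ := hγ₁.exists_concat hkh hh
      (isApproxSolOn_add_smul hv ((mul_le_mul_of_nonneg_right hvC hh).trans hε)) (by simp)
    refine ⟨γ, by rw [hleft 0 hkh, h₀], hγ, fun t ht => ?_⟩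
    rcases le_or_gt t (k * h) with htk | htk
    · rw [hleft t htk]
      exact hdist t ⟨ht.1, htk⟩
    obtain ⟨s, rfl⟩ : ∃ s, t = k * h + s := ⟨t - k * h, by ring⟩
    have hs : 0 ≤ s := by linarith
    rw [hright s hs]
    calc dist (γ₁ (k * h) + s • v) x
        ≤ dist (γ₁ (k * h) + s • v) (γ₁ (k * h)) + dist (γ₁ (k * h)) x := dist_triangle _ _ _
      _ ≤ C * s + C * (k * h) := by
        rw [dist_self_add_left, norm_smul, Real.norm_of_nonneg hs, mul_comm s]
        gcongr
      _ = C * (k * h + s) := by ring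

theorem Standing.exists_forall_reach_nonempty {F : X m → Set (X m)} (hF : Standing F)
    {K : Set (X m)} (hK : IsCompact K) : ∃ η > 0, ∀ x ∈ K, (reach F η x).Nonempty := by
  obtain ⟨C, hC₀, hC⟩ := hF.exists_forall_subset_closedBall (hK.cthickening (r := 1))
  have hC₀ : (0 : ℝ) < C := hC₀
  refine ⟨1 / C, by positivity, fun x hx => ?_⟩
  have heuler (n : ℕ) : ∃ γ : ℝ → X m, γ 0 = x ∧
      IsApproxSolOn F (1 / ((n : ℝ) + 1)) γ (Icc 0 (1 / C)) ∧
      MapsTo γ (Icc 0 (1 / C)) (closedBall x 1) := by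
    have hsteps : ((n + 1 : ℕ) : ℝ) * (1 / C / (n + 1)) = 1 / C := by push_cast; field_simp
    obtain ⟨γ, h₀, hγ, hdist⟩ := hF.exists_isApproxSolOn (h := 1 / C / (n + 1))
      (ε := 1 / ((n : ℝ) + 1)) (x := x)
      (fun y hy => hC y (mem_cthickening_of_dist_le y x 1 K hx hy)) (by positivity)
      (le_of_eq (by field_simp)) (n + 1) (by rw [hsteps, mul_one_div_cancel hC₀.ne'])
    rw [hsteps] at hγ hdist
    refine ⟨γ, h₀, hγ, fun t ht => mem_closedBall.2 ((hdist t ht).trans ?_)⟩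
    rw [← mul_one_div_cancel hC₀.ne']
    exact mul_le_mul_of_nonneg_left ht.2 hC₀.le
  choose γ h₀ hγ hγN using heuler
  obtain ⟨τ, hτ, y, hy, -⟩ := hF.exists_tendsto_mem_reach (Ultrafilter.of atTop)
    (isCompact_closedBall x 1) (one_div_nonneg.2 hC₀.le) (t := fun _ => 1 / (C : ℝ))
    (tendsto_one_div_add_atTop_nhds_zero_nat.mono_left (Ultrafilter.of_le _))
    (fun n => div_le_one_of_le₀ (by simp) (by positivity)) (fun _ => ⟨le_rfl, le_rfl⟩) hγ hγN
    (by simpa only [h₀] using tendsto_const_nhds)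
  rw [Icc_self, mem_singleton_iff] at hτ
  exact ⟨y, hτ ▸ hy⟩

section Reach

variable {F : X m → Set (X m)} {x y : X m} {s t T : ℝ}

theorem IsSolOn.exists_concat (hF : Standing F) {T₁ T₂ : ℝ} {γ₁ γ₂ : ℝ → X m} (hT₁ : 0 ≤ T₁)
    (hT₂ : 0 ≤ T₂) (h₁ : IsSolOn F γ₁ (Icc 0 T₁)) (h₂ : IsSolOn F γ₂ (Icc 0 T₂))
    (he : γ₁ T₁ = γ₂ 0) :
    ∃ γ, IsSolOn F γ (Icc 0 (T₁ + T₂)) ∧ (∀ t ≤ T₁, γ t = γ₁ t) ∧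
      ∀ t ≥ 0, γ (T₁ + t) = γ₂ t := by
  obtain ⟨γ, hγ, hleft, hright⟩ :=
    h₁.isApproxSolOn.exists_concat hT₁ hT₂ h₂.isApproxSolOn he
  exact ⟨γ, hγ.isSolOn hF (add_nonneg hT₁ hT₂), hleft, hright⟩

theorem IsSolOn.comp_const_add {γ : ℝ → X m} (h : IsSolOn F γ (Icc 0 T)) (hF : Standing F)
    (hs : s ∈ Icc 0 T) : IsSolOn F (fun u => γ (s + u)) (Icc 0 (T - s)) :=
  ((h.isApproxSolOn.comp_const_add s).mono (Icc_subset_Icc_left (sub_nonpos.2 hs.1))).isSolOn hF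
    (sub_nonneg.2 hs.2)

theorem IsSolOn.mem_reach {γ : ℝ → X m} (h : IsSolOn F γ (Icc 0 T)) (ht : t ≤ T) :
    γ t ∈ reach F t (γ 0) :=
  ⟨γ, h.mono (Icc_subset_Icc_right ht), rfl, rfl⟩

theorem mem_reach_zero (hF : Standing F) : x ∈ reach F 0 x := by
  refine ⟨fun _ => x, IsApproxSolOn.isSolOn ⟨continuousOn_const, ?_⟩ hF le_rfl, rfl, rfl⟩
  rw [Icc_self]
  rintro s rfl t rfl hst
  exact absurd hst (lt_irrefl _)

theorem reach_add (hF : Standing F) (hs : 0 ≤ s) (ht : 0 ≤ t) :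
    reach F (s + t) x = reachSet F t (reach F s x) := by
  ext z
  simp only [reachSet, mem_iUnion₂]
  constructor
  · rintro ⟨γ, hγ, rfl, rfl⟩
    exact ⟨γ s, hγ.mem_reach (le_add_of_nonneg_right ht), fun u => γ (s + u),
      by simpa using hγ.comp_const_add hF ⟨hs, le_add_of_nonneg_right ht⟩, by simp, rfl⟩
  · rintro ⟨_, ⟨γ₁, h₁, rfl, rfl⟩, ⟨γ₂, h₂, he, rfl⟩⟩
    obtain ⟨γ, hγ, hleft, hright⟩ := h₁.exists_concat hF hs ht h₂ he.symm
    exact ⟨γ, hγ, hleft 0 hs, hright t ht⟩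

theorem mem_basin_iff {A : Set (X m)} : x ∈ basin F A ↔ NoBlowup F {x} ∧
    ∀ ε > 0, ∃ T : ℝ, ∀ t ≥ T, ∀ y ∈ reach F t x, infDist y A < ε := by
  simp [basin, Attracts, reachSet]

theorem NoBlowup.of_mem_reach (hF : Standing F) (hx : NoBlowup F {x}) (ht : 0 ≤ t)
    (hy : y ∈ reach F t x) : NoBlowup F {y} := by
  obtain ⟨γ, hγ, rfl, rfl⟩ := hy
  rintro T hT s hs γ₂ hγ₂ h₀
  obtain ⟨γ₃, hγ₃, hleft, hright⟩ := hγ.exists_concat hF ht hs.1 hγ₂ h₀.symm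
  obtain ⟨γ₄, hγ₄, heq⟩ := hx (t + T) (by linarith) (t + s)
    ⟨by linarith [hs.1], by linarith [hs.2]⟩ γ₃ hγ₃ (hleft 0 ht)
  refine ⟨fun u => γ₄ (t + u), ?_, fun u hu => ?_⟩
  · simpa using hγ₄.comp_const_add hF ⟨ht, le_add_of_nonneg_right hT.le⟩
  · rw [← hright u hu.1]
    exact heq ⟨by linarith [hu.1], by linarith [hu.2]⟩

theorem reach_subset_basin (hF : Standing F) {A : Set (X m)} (hx : x ∈ basin F A) (ht : 0 ≤ t) :
    reach F t x ⊆ basin F A := by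
  intro y hy
  obtain ⟨hnb, hattr⟩ := mem_basin_iff.1 hx
  refine mem_basin_iff.2 ⟨hnb.of_mem_reach hF ht hy, fun ε hε => ?_⟩
  obtain ⟨T, hT⟩ := hattr ε hε
  refine ⟨max T 0, fun s hs z hz => hT (t + s) (by linarith [le_of_max_le_left hs]) z ?_⟩
  rw [reach_add hF ht (le_of_max_le_right hs)]
  exact mem_biUnion hy hz

theorem noBlowup_of_forall_reach_subset (hF : Standing F) {K : Set (X m)} (hK : IsCompact K)
    (hx : ∀ t ≥ 0, reach F t x ⊆ K) : NoBlowup F {x} := by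
  obtain ⟨η, hη, hlocal⟩ := hF.exists_forall_reach_nonempty hK
  rintro T - s hs γ hγ rfl
  have hextend (k : ℕ) :
      ∃ γ', IsSolOn F γ' (Icc 0 (s + k * η)) ∧ EqOn γ' γ (Icc 0 s) := by
    induction k with
    | zero => exact ⟨γ, by simpa using hγ, fun _ _ => rfl⟩
    | succ k ih =>
      obtain ⟨γ₁, h₁, heq⟩ := ih
      have hkη : 0 ≤ k * η := by positivity
      have hend : γ₁ (s + k * η) ∈ K := hx _ (add_nonneg hs.1 hkη) <| by
        simpa only [heq (left_mem_Icc.2 hs.1)] using h₁.mem_reach le_rfl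
      obtain ⟨-, γ₂, h₂, he, -⟩ := hlocal _ hend
      obtain ⟨γ₃, h₃, hleft, -⟩ := h₁.exists_concat hF (add_nonneg hs.1 hkη) hη.le h₂ he.symm
      refine ⟨γ₃, ?_, fun t ht => (hleft t (by linarith [ht.2])).trans (heq ht)⟩
      rwa [Nat.cast_succ, add_one_mul, ← add_assoc]
  obtain ⟨k, hk⟩ := exists_nat_ge (T / η)
  obtain ⟨γ', hγ', heq⟩ := hextend k
  rw [div_le_iff₀ hη] at hk
  exact ⟨γ', hγ'.mono (Icc_subset_Icc_right (by linarith [hs.1])), heq⟩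

end Reach

theorem exists_notMem_interior_mapsTo_Icc {α : Type*} [TopologicalSpace α] {γ : ℝ → α} {a b : ℝ}
    (hγ : ContinuousOn γ (Icc a b)) {N : Set α} (hN : IsClosed N) (ha : γ a ∈ N)
    (h : ∃ t ∈ Icc a b, γ t ∉ N) :
    ∃ τ ∈ Icc a b, γ τ ∉ interior N ∧ MapsTo γ (Icc a τ) N := by
  obtain ⟨t, ht, htN⟩ := h
  obtain ⟨τ, ⟨hτ, hτN⟩, hleast⟩ := (isCompact_Icc.of_isClosed_subset
    (hγ.preimage_isClosed_of_isClosed isClosed_Icc isOpen_interior.isClosed_compl)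
    inter_subset_left).exists_isLeast ⟨t, ht, fun h => htN (interior_subset h)⟩
  refine ⟨τ, hτ, hτN, ?_⟩
  rcases hτ.1.eq_or_lt with rfl | haτ
  · rwa [Icc_self, mapsTo_singleton]
  have hbefore : MapsTo γ (Ico a τ) (interior N) := fun u hu => by
    by_contra huN
    exact hu.2.not_ge (hleast ⟨⟨hu.1, hu.2.le.trans hτ.2⟩, huN⟩)
  rw [← closure_Ico haτ.ne]
  refine (hbefore.closure_of_continuousOn (hγ.mono ?_)).mono_right
    (closure_minimal interior_subset hN)
  rw [closure_Ico haτ.ne]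
  exact Icc_subset_Icc_right hτ.2

section Semicontinuity

variable {F : X m → Set (X m)} {x : X m}

theorem exists_reach_inter_nonempty_of_frequently (hF : Standing F) {N Z : Set (X m)}
    (hN : IsCompact N) (hZ : IsClosed Z) {a b : ℝ} (ha : 0 ≤ a)
    (h : ∃ᶠ x' in 𝓝 x, ∃ t ∈ Icc a b, ∃ γ, IsSolOn F γ (Icc 0 t) ∧ γ 0 = x' ∧
      MapsTo γ (Icc 0 t) N ∧ γ t ∈ Z) :
    ∃ t ∈ Icc a b, (reach F t x ∩ Z).Nonempty := by
  set S := {x' | ∃ t ∈ Icc a b, ∃ γ, IsSolOn F γ (Icc 0 t) ∧ γ 0 = x' ∧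
    MapsTo γ (Icc 0 t) N ∧ γ t ∈ Z}
  have : NeBot (comap ((↑) : S → X m) (𝓝 x)) :=
    mem_closure_iff_comap_neBot.1 (mem_closure_iff_frequently.2 h)
  choose t ht γ hγ h₀ hγN hγZ using fun x' : S => x'.2
  obtain ⟨τ, hτ, y, hy, hlim⟩ := hF.exists_tendsto_mem_reach
    (Ultrafilter.of (comap ((↑) : S → X m) (𝓝 x))) hN ha (tendsto_const_nhds (x := (0 : ℝ)))
    (fun _ => zero_le_one) ht (fun i => (hγ i).isApproxSolOn) hγN
    (by simpa only [h₀] using tendsto_comap.mono_left (Ultrafilter.of_le _))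
  exact ⟨τ, hτ, y, hy, hZ.mem_of_tendsto hlim (Eventually.of_forall hγZ)⟩

theorem eventually_forall_reach_subset_of_subset_interior (hF : Standing F) {N : Set (X m)}
    (hN : IsCompact N) {b : ℝ} (hb : 0 ≤ b) (hx : ∀ t ∈ Icc 0 b, reach F t x ⊆ interior N) :
    ∀ᶠ x' in 𝓝 x, ∀ t ∈ Icc 0 b, reach F t x' ⊆ N := by
  by_contra hcon
  have hxN : ∀ᶠ x' in 𝓝 x, x' ∈ interior N :=
    isOpen_interior.mem_nhds (hx 0 (left_mem_Icc.2 hb) (mem_reach_zero hF))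
  obtain ⟨t, ht, y, hy, hyN⟩ := exists_reach_inter_nonempty_of_frequently (x := x) hF hN
    isOpen_interior.isClosed_compl le_rfl <|
      (not_eventually.1 hcon |>.and_eventually hxN).mono <| by
      rintro _ ⟨hexit, hx'⟩
      push Not at hexit
      obtain ⟨t, ht, hexit⟩ := hexit
      obtain ⟨_, ⟨γ, hγ, rfl, rfl⟩, htN⟩ := not_subset.1 hexit
      obtain ⟨τ, hτ, hτN, hmaps⟩ := exists_notMem_interior_mapsTo_Icc hγ.isApproxSolOn.1
        hN.isClosed (interior_subset hx') ⟨t, right_mem_Icc.2 ht.1, htN⟩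
      exact ⟨τ, ⟨hτ.1, hτ.2.trans ht.2⟩, γ, hγ.mono (Icc_subset_Icc_right hτ.2), rfl, hmaps, hτN⟩
  exact hyN (hx t ht hy)

theorem eventually_forall_reach_subset (hF : Standing F) {K W : Set (X m)} (hK : IsCompact K)
    (hW : IsOpen W) {a b : ℝ} (ha : 0 ≤ a) (hb : 0 ≤ b) (hxK : ∀ t ∈ Icc 0 b, reach F t x ⊆ K)
    (hxW : ∀ t ∈ Icc a b, reach F t x ⊆ W) :
    ∀ᶠ x' in 𝓝 x, ∀ t ∈ Icc a b, reach F t x' ⊆ W := by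
  obtain ⟨N, hN, hKN⟩ := exists_compact_superset hK
  have htrap := eventually_forall_reach_subset_of_subset_interior hF hN hb
    fun t ht => (hxK t ht).trans hKN
  by_contra hcon
  obtain ⟨t, ht, y, hy, hyW⟩ := exists_reach_inter_nonempty_of_frequently (x := x) hF hN
    hW.isClosed_compl ha <| (not_eventually.1 hcon |>.and_eventually htrap).mono <| by
      rintro _ ⟨hexit, hx'⟩
      push Not at hexit
      obtain ⟨t, ht, hexit⟩ := hexit
      obtain ⟨_, ⟨γ, hγ, rfl, rfl⟩, htW⟩ := not_subset.1 hexit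
      exact ⟨t, ht, γ, hγ, rfl,
        fun u hu => hx' u ⟨hu.1, hu.2.trans ht.2⟩ (hγ.mem_reach hu.2), htW⟩
  exact hyW (hxW t ht hy)

theorem exists_forall_ge_reachSet_inter_subset {U C W : Set (X m)} (hC : IsCompact C)
    (hW : IsOpen W) (hUW : omegaLim F U ⊆ W) : ∃ T, ∀ t ≥ T, reachSet F t U ∩ C ⊆ W := by
  by_contra! hcon
  choose t ht hsub using fun n : ℕ => hcon n
  choose p hp hpW using fun n => not_subset.1 (hsub n)
  obtain ⟨y, -, f, hf, hlim⟩ := hC.tendsto_subseq fun n => (hp n).2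
  have hy : y ∈ omegaLim F U := ⟨t ∘ f, p ∘ f,
    (tendsto_atTop_mono ht tendsto_natCast_atTop_atTop).comp hf.tendsto_atTop,
    fun n => (hp (f n)).1, hlim⟩
  exact hW.isClosed_compl.mem_of_tendsto hlim (Eventually.of_forall fun n => hpW (f n)) (hUW hy)

theorem eventually_forall_ge_reach_subset (hF : Standing F) {U K N : Set (X m)} (hN : IsCompact N)
    (hNU : N ⊆ U) (hUN : omegaLim F U ⊆ interior N) (hK : IsCompact K)
    (hxK : ∀ t ≥ 0, reach F t x ⊆ K) {T₀ : ℝ} (hT₀ : 0 ≤ T₀)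
    (hx : ∀ t ≥ T₀, reach F t x ⊆ interior N) :
    ∀ᶠ x' in 𝓝 x, ∀ t ≥ T₀, reach F t x' ⊆ N := by
  obtain ⟨T, hT⟩ := exists_forall_ge_reachSet_inter_subset hN isOpen_interior hUN
  filter_upwards [eventually_forall_reach_subset hF hK isOpen_interior hT₀
    (b := T₀ + max T 0) (by positivity) (fun t ht => hxK t ht.1) (fun t ht => hx t ht.1)]
    with x' hx'
  rintro t ht _ ⟨γ, hγ, rfl, rfl⟩
  by_contra htN
  have hstart : γ T₀ ∈ N := interior_subset <|
    hx' T₀ (left_mem_Icc.2 (by simp)) (hγ.mem_reach ht)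
  obtain ⟨τ, hτ, hτN, hmaps⟩ := exists_notMem_interior_mapsTo_Icc
    (hγ.isApproxSolOn.1.mono (Icc_subset_Icc_left hT₀)) hN.isClosed hstart
    ⟨t, right_mem_Icc.2 ht, htN⟩
  have hτreach := hγ.mem_reach hτ.2
  rcases le_or_gt τ (T₀ + max T 0) with hlt | hgt
  · exact hτN (hx' τ ⟨hτ.1, hlt⟩ hτreach)
  have htail := (hγ.mono (Icc_subset_Icc_right hτ.2)).comp_const_add hF ⟨hT₀, hτ.1⟩
  have hτU : γ τ ∈ reachSet F (τ - T₀) U :=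
    mem_biUnion (hNU hstart) ⟨_, htail, by simp, by simp⟩
  exact hτN (hT (τ - T₀) (by linarith [le_max_left T 0])
    ⟨hτU, hmaps (right_mem_Icc.2 hτ.1)⟩)

theorem isOpen_basin (hF : Standing F) {𝒜 : Set (X m)} (h𝒜 : IsAttractor F 𝒜)
    (hne : 𝒜.Nonempty)
    (htrap : ∀ x ∈ basin F 𝒜, ∃ K, IsCompact K ∧ ∀ t ≥ 0, reach F t x ⊆ K) :
    IsOpen (basin F 𝒜) := by
  obtain ⟨hA, U, hU, hω⟩ := h𝒜
  obtain ⟨r, hr, hrU⟩ := hA.exists_cthickening_subset_open isOpen_interior hU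
  have hthick : thickening r 𝒜 ⊆ interior (cthickening r 𝒜) :=
    thickening_subset_interior_cthickening r 𝒜
  refine isOpen_iff_mem_nhds.2 fun x hx => ?_
  obtain ⟨K, hK, hxK⟩ := htrap x hx
  obtain ⟨T₁, hT₁⟩ := (mem_basin_iff.1 hx).2 r hr
  obtain ⟨K', hK', hKK'⟩ := exists_compact_superset hK
  have hT₀ : 0 ≤ max T₁ 0 := le_max_right _ _
  set T₀ := max T₁ 0
  filter_upwards [
    eventually_forall_reach_subset_of_subset_interior hF hK' hT₀
      fun t ht => (hxK t ht.1).trans hKK',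
    eventually_forall_ge_reach_subset hF hA.cthickening (hrU.trans interior_subset)
      (hω.le.trans ((self_subset_thickening hr 𝒜).trans hthick)) hK hxK hT₀
      fun t ht y hy => hthick ((mem_thickening_iff_infDist_lt hne).2
        (hT₁ t (le_of_max_le_left ht) y hy))] with x' hearly hlate
  refine mem_basin_iff.2 ⟨noBlowup_of_forall_reach_subset hF (hK'.union (hA.cthickening (r := r)))
    fun t ht => ?_, fun ε hε => ?_⟩
  · rcases le_total t T₀ with htT | htT
    · exact subset_union_of_subset_left (hearly t ⟨ht, htT⟩) _
    · exact subset_union_of_subset_right (hlate t htT) _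
  · obtain ⟨T, hT⟩ := exists_forall_ge_reachSet_inter_subset hA.cthickening isOpen_thickening
      (hω.le.trans (self_subset_thickening hε 𝒜))
    refine ⟨T₀ + max T 0, fun t ht y hy => (mem_thickening_iff_infDist_lt hne).1 ?_⟩
    have htT : max T 0 ≤ t - T₀ := by linarith
    have htT₀ : T₀ ≤ t := by linarith [le_max_right T 0]
    refine hT (t - T₀) (le_of_max_le_left htT) ⟨?_, hlate t htT₀ hy⟩
    rw [← add_sub_cancel T₀ t, reach_add hF hT₀ (le_of_max_le_right htT)] at hy
    exact biUnion_mono ((hlate T₀ le_rfl).trans (hrU.trans interior_subset)) (fun _ _ => le_rfl) hy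

end Semicontinuity

section Lyapunov

theorem le_of_forall_eventually_nhdsGT_le {φ : ℝ → ℝ} {a b : ℝ} (hφ : ContinuousOn φ (Icc a b))
    (hab : a ≤ b) {Z : Set ℝ} (hZ : (φ '' Z).Countable)
    (h : ∀ t ∈ Ico a b, t ∉ Z → ∀ᶠ s in 𝓝[>] t, φ s ≤ φ t) : φ b ≤ φ a := by
  by_contra! hlt
  -- A level avoiding the countable set `φ '' Z` cannot be crossed upwards.
  obtain ⟨c, hcZ, hac, hcb⟩ := (hZ.dense_compl ℝ).exists_between hlt
  have hsub : Icc a b ⊆ {t | φ t ≤ c} := by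
    refine IsClosed.Icc_subset_of_forall_mem_nhdsWithin ?_ hac.le fun t ht => ?_
    · rw [inter_comm]
      exact hφ.preimage_isClosed_of_isClosed isClosed_Icc isClosed_Iic
    rcases (show φ t ≤ c from ht.1).lt_or_eq with htc | htc
    · have hcont : Tendsto φ (𝓝[>] t) (𝓝 (φ t)) :=
        ((hφ t (Ico_subset_Icc_self ht.2)).mono_left
          (nhdsWithin_mono t (Ioo_subset_Icc_self.trans (Icc_subset_Icc_left ht.2.1)))).mono_left
          (nhdsWithin_Ioo_eq_nhdsGT ht.2.2).ge
      exact (hcont.eventually_lt_const htc).mono fun _ => le_of_lt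
    · exact (h t ht.2 fun htZ => hcZ ⟨t, htZ, htc⟩).mono fun _ hs => hs.trans htc.le
  exact hcb.not_ge (hsub (right_mem_Icc.2 hab))

variable {F : X m → Set (X m)} {𝒜 : Set (X m)} {l : ℕ} {M : ℕ → Set (X m)} {V : X m → ℝ}
  {x y : X m} {t : ℝ}

theorem IsMLFunction.countable_image (hML : IsMLFunction F 𝒜 l M V) :
    (V '' ⋃ k ∈ Icc 1 l, M k).Countable := by
  simp only [image_iUnion₂]
  refine (finite_Icc 1 l).countable.biUnion fun k hk => ?_
  obtain ⟨c, hc⟩ := hML.2.1 k hk.1 hk.2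
  exact (countable_singleton c).mono ((image_subset_iff (t := {c})).2 hc)

theorem IsMLFunction.le_of_mem_reach (hML : IsMLFunction F 𝒜 l M V) (hF : Standing F)
    (hM : ∀ k ∈ Icc 1 l, IsClosed (M k)) (hx : x ∈ basin F 𝒜) (ht : 0 ≤ t)
    (hy : y ∈ reach F t x) : V y ≤ V x := by
  obtain ⟨γ, hγ, rfl, rfl⟩ := hy
  have hγc := hγ.isApproxSolOn.1
  have hγΩ : MapsTo γ (Icc 0 t) (basin F 𝒜) := fun s hs =>
    reach_subset_basin hF hx hs.1 (hγ.mem_reach hs.2)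
  have hD : IsClosed (⋃ k ∈ Icc 1 l, M k) := (finite_Icc 1 l).isClosed_biUnion hM
  refine le_of_forall_eventually_nhdsGT_le (hML.1.comp hγc hγΩ) ht
    (Z := γ ⁻¹' ⋃ k ∈ Icc 1 l, M k)
    (hML.countable_image.mono ?_) fun s hs hsD => ?_
  · rw [image_comp]
    exact image_mono (image_preimage_subset γ _)
  have hcont : Tendsto γ (𝓝[Ico s t] s) (𝓝 (γ s)) := (hγc s (Ico_subset_Icc_self hs)).mono_left
    (nhdsWithin_mono s (Ico_subset_Icc_self.trans (Icc_subset_Icc_left hs.1)))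
  rw [nhdsWithin_Ico_eq_nhdsGE hs.2] at hcont
  obtain ⟨u, hu, hsub⟩ := mem_nhdsGE_iff_exists_Icc_subset.1
    (inter_mem (hcont (hD.isOpen_compl.mem_nhds hsD)) (Ico_mem_nhdsGE hs.2))
  have hanti := hML.2.2 s u γ
    (hγ.mono fun v hv => ⟨hs.1.trans hv.1, (hsub hv).2.2.le⟩)
    fun v hv => ⟨hγΩ ⟨hs.1.trans hv.1, (hsub hv).2.2.le⟩, (hsub hv).1⟩
  filter_upwards [Ioo_mem_nhdsGT hu] with v hv
  exact hanti.antitoneOn (left_mem_Icc.2 hu.le) (Ioo_subset_Icc_self hv) hv.1.le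

theorem RadiallyUnbounded.isCompact_sublevel {U : Set (X m)} (h : RadiallyUnbounded U V)
    (hV : ContinuousOn V U) (R : ℝ) : IsCompact {x ∈ U | V x ≤ R} := by
  obtain ⟨K, hKU, hK, hVK⟩ := h (max R 1) (by positivity)
  have hsub : {x ∈ U | V x ≤ R} = K ∩ V ⁻¹' Iic R := by
    ext x
    refine ⟨fun hx => ⟨by_contra fun hxK => ?_, hx.2⟩, fun hx => ⟨hKU hx.1, hx.2⟩⟩
    exact (hVK x ⟨hx.1, hxK⟩).not_ge (hx.2.trans (le_max_left R 1))
  rw [hsub]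
  exact hK.of_isClosed_subset ((hV.mono hKU).preimage_isClosed_of_isClosed hK.isClosed
    isClosed_Iic) inter_subset_left

theorem IsMLFunction.nonempty_of_basin_nonempty (hML : IsMLFunction F 𝒜 l M V)
    (hF : Standing F) (hru : RadiallyUnbounded (basin F 𝒜) V) (hne : (basin F 𝒜).Nonempty) :
    (⋃ k ∈ Icc 1 l, M k).Nonempty := by
  obtain ⟨x₀, hx₀⟩ := hne
  obtain ⟨x, ⟨hx, hxx₀⟩, hmin⟩ := (hru.isCompact_sublevel hML.1 (V x₀)).exists_isMinOn
    ⟨x₀, hx₀, le_rfl⟩ (hML.1.mono (sep_subset _ _))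
  by_contra! hD
  obtain ⟨γ₀, hγ₀, rfl, -⟩ := mem_reach_zero (x := x) hF
  obtain ⟨γ, hγ, heq⟩ := (mem_basin_iff.1 hx).1 1 one_pos 0 (left_mem_Icc.2 zero_le_one) γ₀ hγ₀ rfl
  have hstart : γ 0 = γ₀ 0 := heq (left_mem_Icc.2 le_rfl)
  have hγΩ : ∀ t ∈ Icc (0 : ℝ) 1, γ t ∈ basin F 𝒜 := fun t ht =>
    reach_subset_basin hF hx ht.1 (hstart ▸ hγ.mem_reach ht.2)
  have hdecr : V (γ 1) < V (γ₀ 0) := hstart ▸ hML.2.2 0 1 γ hγ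
    (fun t ht => by simpa only [hD, sdiff_empty] using hγΩ t ht)
    (left_mem_Icc.2 zero_le_one) (right_mem_Icc.2 zero_le_one) one_pos
  exact hdecr.not_ge
    (hmin ⟨hγΩ 1 (right_mem_Icc.2 zero_le_one), hdecr.le.trans hxx₀⟩)

end Lyapunov

section IteratedHomotopy

variable {Y : Type*} [TopologicalSpace Y] {S : Set Y} {r : C(Y, Y)} {n k : ℕ} {t : ℝ} {x : Y}

theorem continuous_homotopy_extend_uncurry {Z : Type*} [TopologicalSpace Z] {f g : C(Y, Z)}
    (H : f.Homotopy g) : Continuous fun p : ℝ × Y => H.extend p.1 p.2 :=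
  H.continuous.comp ((continuous_projIcc.comp continuous_fst).prodMk continuous_snd)

theorem homotopyRel_extend_apply_of_mem {Z : Type*} [TopologicalSpace Z] {f g : C(Y, Z)}
    (H : f.HomotopyRel g S) (t : ℝ) (hx : x ∈ S) : H.extend t x = f x :=
  H.eq_fst (projIcc 0 1 zero_le_one t) hx

/-- The homotopy `H` performed `n` times in succession, the `k`-th time while `t ∈ [k, k + 1]`. -/
noncomputable def stepFlow (H : (ContinuousMap.id Y).HomotopyRel r S) : ℕ → ℝ → Y → Y
  | 0, _, x => x
  | n + 1, t, x => H.extend (t - n) (stepFlow H n t x)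

/-- The homotopy `H` from the identity performed over and over again, for all times `t ≥ 0`. -/
noncomputable def homotopyFlow (H : (ContinuousMap.id Y).HomotopyRel r S) (t : ℝ) (x : Y) : Y :=
  stepFlow H ⌈t⌉₊ t x

variable (H : (ContinuousMap.id Y).HomotopyRel r S)

theorem continuous_stepFlow_uncurry (n : ℕ) :
    Continuous fun p : ℝ × Y => stepFlow H n p.1 p.2 := by
  induction n with
  | zero => exact continuous_snd
  | succ n ih =>
    exact (continuous_homotopy_extend_uncurry H.toHomotopy).comp
      ((continuous_fst.sub continuous_const).prodMk ih)

theorem stepFlow_add_of_le (ht : t ≤ n) : stepFlow H (n + k) t x = stepFlow H n t x := by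
  induction k with
  | zero => rfl
  | succ k ih =>
    refine (H.extend_apply_of_le_zero (sub_nonpos.2 (ht.trans ?_)) _).trans ih
    exact_mod_cast n.le_add_right k

theorem stepFlow_add_of_mem (h : stepFlow H n t x ∈ S) :
    stepFlow H (n + k) t x = stepFlow H n t x := by
  induction k with
  | zero => rfl
  | succ k ih => exact (homotopyRel_extend_apply_of_mem H _ (ih ▸ h)).trans ih

theorem stepFlow_eq_iterate (ht : n ≤ t) : stepFlow H n t x = r^[n] x := by
  induction n with
  | zero => rfl
  | succ n ih =>
    rw [Nat.cast_succ] at ht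
    rw [Function.iterate_succ_apply', ← ih (by linarith)]
    exact H.extend_apply_of_one_le (le_sub_iff_add_le'.2 ht) _

theorem homotopyFlow_eq_stepFlow (ht : t ≤ n) : homotopyFlow H t x = stepFlow H n t x := by
  obtain ⟨k, rfl⟩ := Nat.exists_eq_add_of_le (Nat.ceil_le.2 ht)
  exact (stepFlow_add_of_le H (Nat.le_ceil t)).symm

theorem continuous_homotopyFlow_uncurry :
    Continuous fun p : ℝ × Y => homotopyFlow H p.1 p.2 := by
  refine continuous_iff_continuousAt.2 fun ⟨t, x⟩ => ?_
  obtain ⟨n, hn⟩ := exists_nat_gt t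
  refine (continuous_stepFlow_uncurry H n).continuousAt.congr ?_
  filter_upwards [continuous_fst.continuousAt.eventually_lt_const hn] with p hp
  exact (homotopyFlow_eq_stepFlow H hp.le).symm

theorem homotopyFlow_of_mem (hx : x ∈ S) : homotopyFlow H t x = x := by
  rw [homotopyFlow, ← zero_add ⌈t⌉₊]
  exact stepFlow_add_of_mem H hx

theorem homotopyFlow_mem_of_iterate_mem (hx : r^[n] x ∈ S) (ht : n ≤ t) :
    homotopyFlow H t x ∈ S := by
  rw [← stepFlow_eq_iterate H ht] at hx
  obtain ⟨k, hk⟩ := Nat.exists_eq_add_of_le (Nat.cast_le.1 (ht.trans (Nat.le_ceil t)))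
  rwa [homotopyFlow, hk, stepFlow_add_of_mem H hx]

theorem exists_homotopicRel_forall_mem [NormalSpace Y] [ParacompactSpace Y]
    (hr : (ContinuousMap.id Y).HomotopicRel r S) (h : ∀ x, ∃ n, ∀ᶠ y in 𝓝 x, r^[n] y ∈ S) :
    ∃ r' : C(Y, Y), (∀ x, r' x ∈ S) ∧ (ContinuousMap.id Y).HomotopicRel r' S := by
  obtain ⟨H⟩ := hr
  obtain ⟨ρ, hρ⟩ : ∃ ρ : C(Y, ℝ), ∀ x, ∀ t ≥ ρ x, homotopyFlow H t x ∈ S := by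
    refine exists_continuous_forall_mem_convex_of_local_const
      (t := fun x => {c | ∀ t ≥ c, homotopyFlow H t x ∈ S}) (fun x => ?_) fun x => ?_
    · exact OrdConnected.convex ⟨fun _ hc _ _ _ hd t ht => hc t (hd.1.trans ht)⟩
    · obtain ⟨n, hn⟩ := h x
      exact ⟨n, hn.mono fun y hy t ht => homotopyFlow_mem_of_iterate_mem H hy ht⟩
  have hcont : Continuous fun p : unitInterval × Y => homotopyFlow H (p.1 * ρ p.2) p.2 :=
    (continuous_homotopyFlow_uncurry H).comp (f := fun p : unitInterval × Y => (p.1 * ρ p.2, p.2))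
      (by fun_prop)
  refine ⟨⟨fun x => homotopyFlow H (ρ x) x,
      (continuous_homotopyFlow_uncurry H).comp (ρ.continuous.prodMk continuous_id)⟩,
    fun x => hρ x _ le_rfl, ⟨⟨⟨_, hcont⟩, fun x => ?_, fun x => ?_⟩, fun σ x hx => ?_⟩⟩
  · simp [homotopyFlow, stepFlow]
  · simp
  · exact homotopyFlow_of_mem H hx

theorem iterate_le_max_of_forall_le_max {α : Type*} {f : α → α} {φ : α → ℝ} {b R δ : ℝ}
    (hδ : 0 ≤ δ) (hf : ∀ x, φ x ≤ R → φ (f x) ≤ max b (φ x - δ)) {x : α} (hbR : b ≤ R)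
    (hx : φ x ≤ R) (n : ℕ) : φ (f^[n] x) ≤ max b (R - n * δ) := by
  induction n with
  | zero => simpa using Or.inr hx
  | succ n ih =>
    have hR : φ (f^[n] x) ≤ R := ih.trans (max_le hbR (sub_le_self R (by positivity)))
    rw [Function.iterate_succ_apply', Nat.cast_succ, add_one_mul, ← sub_sub]
    refine (hf _ hR).trans (max_le (le_max_left _ _) ?_)
    rcases le_max_iff.1 ih with h | h
    · exact le_max_of_le_left (by linarith)
    · exact le_max_of_le_right (by linarith)

end IteratedHomotopy

theorem isSDR_of_homotopicRel {A Ω : Set (X m)} (hA : A ⊆ Ω) {r : C(Ω, Ω)}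
    (hr : ∀ x, (r x : X m) ∈ A)
    (h : (ContinuousMap.id Ω).HomotopicRel r {x | (x : X m) ∈ A}) : IsSDR A Ω := by
  classical
  obtain ⟨H⟩ := h
  obtain ⟨G, hG⟩ : ∃ G : ℝ × X m → X m, ∀ σ y (hy : y ∈ Ω), G (σ, y) = H.extend σ ⟨y, hy⟩ :=
    ⟨fun p => if h : p.2 ∈ Ω then H.extend p.1 ⟨p.2, h⟩ else p.2, fun _ _ hy => dif_pos hy⟩
  refine ⟨hA, G, ?_, fun σ _ y hy => ?_, fun y hy => ?_, fun y hy => ?_, fun σ _ a ha => ?_⟩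
  · rw [continuousOn_iff_continuous_domRestrict]
    have hsnd : Continuous fun p : ↥(Icc (0 : ℝ) 1 ×ˢ Ω) => (⟨p.1.2, p.2.2⟩ : Ω) :=
      (continuous_snd.comp continuous_subtype_val).subtype_mk _
    exact (continuous_subtype_val.comp <| (continuous_homotopy_extend_uncurry H.toHomotopy).comp
      ((continuous_fst.comp continuous_subtype_val).prodMk hsnd)).congr
      fun p => (hG p.1.1 p.1.2 p.2.2).symm
  · exact hG σ y hy ▸ Subtype.coe_prop _
  · exact (hG 0 y hy).trans (congrArg Subtype.val (H.extend_apply_of_le_zero le_rfl _))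
  · rw [hG 1 y hy, H.extend_apply_of_one_le le_rfl]
    exact hr _
  · exact (hG σ a (hA ha)).trans
      (congrArg Subtype.val (homotopyRel_extend_apply_of_mem H σ ha))

section Descent

variable {E : Type*} [NormedAddCommGroup E] [NormedSpace ℝ E] {Ω : Set E} {V : E → ℝ} {v : E → E}
  {x y : E} {c c' : ℝ}

/-- `c` is an admissible Armijo step size for the descent direction `d` at `y`: moving from `y`
by `s • d`, `0 ≤ s ≤ c`, one stays in `Ω` and `V` drops by at least `c * s`. -/
def IsArmijoStep (Ω : Set E) (V : E → ℝ) (d y : E) (c : ℝ) : Prop :=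
  ∀ s ∈ Icc 0 c, y + s • d ∈ Ω ∧ V (y + s • d) ≤ V y - c * s

theorem IsArmijoStep.anti {d : E} (h : IsArmijoStep Ω V d y c) (hc : c' ≤ c) :
    IsArmijoStep Ω V d y c' := fun s hs =>
  ⟨(h s ⟨hs.1, hs.2.trans hc⟩).1, (h s ⟨hs.1, hs.2.trans hc⟩).2.trans
    (sub_le_sub_left (mul_le_mul_of_nonneg_right hc hs.1) _)⟩

theorem isArmijoStep_of_forall_fderiv_le {d : E} (hΩ : IsOpen Ω) (hV : DifferentiableOn ℝ V Ω)
    (h : ∀ s ∈ Icc 0 c, y + s • d ∈ Ω ∧ fderiv ℝ V (y + s • d) d ≤ -c) :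
    IsArmijoStep Ω V d y c := by
  intro s hs
  refine ⟨(h s hs).1, ?_⟩
  have hderiv : ∀ u ∈ Icc 0 s,
      HasDerivAt (fun u : ℝ => V (y + u • d)) (fderiv ℝ V (y + u • d) d) u := fun u hu => by
    have hline : HasDerivAt (fun u : ℝ => y + u • d) d u := by
      simpa using ((hasDerivAt_id u).smul_const d).const_add y
    exact (hV.differentiableAt (hΩ.mem_nhds (h u ⟨hu.1, hu.2.trans hs.2⟩).1)).hasFDerivAt
      |>.comp_hasDerivAt u hline
  have hmvt := (convex_Icc 0 s).image_sub_le_mul_sub_of_deriv_le (C := -c)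
    (fun u hu => (hderiv u hu).continuousAt.continuousWithinAt)
    (fun u hu => (hderiv u (interior_subset hu)).differentiableAt.differentiableWithinAt)
    (fun u hu => by
      have hu := interior_subset hu
      exact (hderiv u hu).deriv.trans_le (h u ⟨hu.1, hu.2.trans hs.2⟩).2)
    0 (left_mem_Icc.2 hs.1) s (right_mem_Icc.2 hs.1) hs.1
  simp only [zero_smul, add_zero, sub_zero] at hmvt
  linarith

theorem exists_eventually_isArmijoStep (hΩ : IsOpen Ω) (hV : ContDiffOn ℝ 1 V Ω)
    (hv : ContinuousOn v Ω) (hx : x ∈ Ω) (hdescent : fderiv ℝ V x (v x) < 0) :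
    ∃ c > 0, ∀ᶠ y in 𝓝 x, IsArmijoStep Ω V (v y) y c := by
  obtain ⟨a, hda, ha⟩ := exists_between hdescent
  have hvx : Tendsto (fun p : ℝ × E => v p.2) (𝓝 0 ×ˢ 𝓝 x) (𝓝 (v x)) :=
    (hv.continuousAt (hΩ.mem_nhds hx)).tendsto.comp tendsto_snd
  have hmove : Tendsto (fun p : ℝ × E => p.2 + p.1 • v p.2) (𝓝 0 ×ˢ 𝓝 x) (𝓝 x) := by
    simpa using tendsto_snd.add (tendsto_fst.smul hvx)
  have hgrad : ContinuousAt (fderiv ℝ V) x :=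
    (hV.continuousOn_fderiv_of_isOpen hΩ le_rfl).continuousAt (hΩ.mem_nhds hx)
  have hslope : Tendsto (fun p : ℝ × E => fderiv ℝ V (p.2 + p.1 • v p.2) (v p.2))
      (𝓝 0 ×ˢ 𝓝 x) (𝓝 (fderiv ℝ V x (v x))) :=
    (isBoundedBilinearMap_apply.continuous.tendsto (fderiv ℝ V x, v x)).comp
      ((hgrad.tendsto.comp hmove).prodMk_nhds hvx)
  obtain ⟨p, hp, q, hq, hpq⟩ := eventually_prod_iff.1
    ((hmove.eventually (hΩ.mem_nhds hx)).and (hslope.eventually_lt_const hda))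
  obtain ⟨ε, hε, hεp⟩ := Metric.eventually_nhds_iff.1 hp
  refine ⟨min (ε / 2) (-a), lt_min (half_pos hε) (neg_pos.2 ha), hq.mono fun y hy => ?_⟩
  refine isArmijoStep_of_forall_fderiv_le hΩ (hV.differentiableOn one_ne_zero) fun s hs => ?_
  have hsε : dist s 0 < ε := by
    rw [Real.dist_0_eq_abs, abs_of_nonneg hs.1]
    exact (hs.2.trans (min_le_left _ _)).trans_lt (half_lt_self hε)
  obtain ⟨hmem, hlt⟩ := hpq (hεp hsε) hy
  exact ⟨hmem, hlt.le.trans (le_neg_of_le_neg (min_le_right _ _))⟩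

theorem exists_continuous_isArmijoStep (hΩ : IsOpen Ω) (hV : ContDiffOn ℝ 1 V Ω)
    (hv : ContinuousOn v Ω) {b : ℝ} (hb : ∀ x ∈ Ω, b ≤ V x → fderiv ℝ V x (v x) < 0) :
    ∃ ψ : C(Ω, ℝ), ∀ x, 0 < ψ x ∧ (b ≤ V x → IsArmijoStep Ω V (v x) x (ψ x)) := by
  refine exists_continuous_forall_mem_convex_of_local_const
    (t := fun x : Ω => {c | 0 < c ∧ (b ≤ V x → IsArmijoStep Ω V (v x) x c)}) (fun x => ?_)
    fun x => ?_
  · exact OrdConnected.convex ⟨fun _ hc _ hc' _ hd =>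
      ⟨hc.1.trans_le hd.1, fun hbx => (hc'.2 hbx).anti hd.2⟩⟩
  have hsub := continuous_subtype_val.tendsto x
  rcases le_or_gt b (V x) with hbx | hbx
  · obtain ⟨c, hc, h⟩ := exists_eventually_isArmijoStep hΩ hV hv x.2 (hb x x.2 hbx)
    exact ⟨c, (hsub.eventually h).mono fun y hy => ⟨hc, fun _ => hy⟩⟩
  · have hVx := hV.continuousOn.continuousAt (hΩ.mem_nhds x.2)
    exact ⟨1, (hsub.eventually (hVx.eventually_lt_const hbx)).mono fun y hy =>
      ⟨one_pos, fun hby => absurd hy hby.not_gt⟩⟩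

theorem exists_homotopicRel_id_add {S : Set Ω} {d : Ω → E} (hd : Continuous d)
    (hdΩ : ∀ (σ : unitInterval) (x : Ω), (x : E) + (σ : ℝ) • d x ∈ Ω) (hdS : ∀ x ∈ S, d x = 0) :
    ∃ r : C(Ω, Ω), (∀ x, (r x : E) = x + d x) ∧ (ContinuousMap.id Ω).HomotopicRel r S := by
  let G : C(unitInterval × Ω, Ω) := ⟨fun p => ⟨_, hdΩ p.1 p.2⟩, by fun_prop⟩
  refine ⟨G.comp ((ContinuousMap.const Ω 1).prodMk (ContinuousMap.id Ω)), fun x => by simp [G],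
    ⟨⟨⟨G, fun x => ?_, fun x => rfl⟩, fun σ x hx => ?_⟩⟩⟩
  · exact Subtype.ext (by simp [G])
  · exact Subtype.ext (by simp [G, hdS x hx])

theorem exists_homotopicRel_le_max_sub (hΩ : IsOpen Ω) (hV : ContDiffOn ℝ 1 V Ω)
    (hv : ContinuousOn v Ω) {b : ℝ} (hb : ∀ x ∈ Ω, b ≤ V x → fderiv ℝ V x (v x) < 0) :
    ∃ (r : C(Ω, Ω)) (δ : C(Ω, ℝ)), (∀ x, 0 < δ x ∧ V (r x) ≤ max b (V x - δ x)) ∧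
      (ContinuousMap.id Ω).HomotopicRel r {x | V x ≤ b} := by
  obtain ⟨ψ, hψ⟩ := exists_continuous_isArmijoStep hΩ hV hv hb
  have hVΩ : Continuous fun x : Ω => V x :=
    continuousOn_iff_continuous_domRestrict.1 hV.continuousOn
  have hvΩ : Continuous fun x : Ω => v x := continuousOn_iff_continuous_domRestrict.1 hv
  -- A step of size `ψ x` lowers `V` by `ψ x ^ 2`; one of size `(V x - b) / ψ x` lowers it to `b`.
  set θ : Ω → ℝ := fun x => min (ψ x) (max (V x - b) 0 / ψ x)
  have hθ : Continuous θ := ψ.continuous.min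
    (((hVΩ.sub continuous_const).max continuous_const).div₀ ψ.continuous fun x => (hψ x).1.ne')
  have hθ_zero {x : Ω} (hx : V x ≤ b) : θ x = 0 := by
    simp [θ, max_eq_right (sub_nonpos.2 hx), (hψ x).1.le]
  have hθ_nonneg (x : Ω) : 0 ≤ θ x :=
    le_min (hψ x).1.le (div_nonneg (le_max_right _ _) (hψ x).1.le)
  have hmem (σ : unitInterval) (x : Ω) : (x : E) + (σ : ℝ) • θ x • v x ∈ Ω := by
    rcases le_total (V x) b with hx | hx
    · simp [hθ_zero hx]
    · rw [smul_smul]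
      exact ((hψ x).2 hx _ ⟨mul_nonneg σ.2.1 (hθ_nonneg x),
        (mul_le_of_le_one_left (hθ_nonneg x) σ.2.2).trans (min_le_left _ _)⟩).1
  obtain ⟨r, hr, hhom⟩ := exists_homotopicRel_id_add (S := {x | V x ≤ b}) (hθ.smul hvΩ) hmem
    fun x hx => by simp [hθ_zero hx]
  refine ⟨r, ψ * ψ, fun x => ⟨mul_pos (hψ x).1 (hψ x).1, ?_⟩, hhom⟩
  rw [hr, ContinuousMap.mul_apply]
  rcases le_total (V x) b with hx | hx
  · simp [hθ_zero hx, hx]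
  refine ((hψ x).2 hx (θ x) ⟨hθ_nonneg x, min_le_left _ _⟩).2.trans (le_max_iff.2 ?_)
  rcases min_choice (ψ x) (max (V x - b) 0 / ψ x) with h | h
  · exact .inr (by simp only [θ, h]; exact le_rfl)
  · refine .inl (le_of_eq ?_)
    simp only [θ, h]
    rw [mul_div_cancel₀ _ (hψ x).1.ne', max_eq_left (sub_nonneg.2 hx), sub_sub_cancel]

theorem isSDR_sublevel_of_fderiv_ne_zero {Ω : Set (X m)} {V : X m → ℝ} (hΩ : IsOpen Ω)
    (hV : ContDiffOn ℝ 1 V Ω) (hcompact : ∀ R, IsCompact {x ∈ Ω | V x ≤ R}) {b : ℝ}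
    (hcrit : ∀ x ∈ Ω, b ≤ V x → fderiv ℝ V x ≠ 0) : IsSDR {x ∈ Ω | V x ≤ b} Ω := by
  have hgrad : ContinuousOn (fun x => -gradient V x) Ω :=
    ((InnerProductSpace.toDual ℝ (X m)).symm.continuous.comp_continuousOn
      (hV.continuousOn_fderiv_of_isOpen hΩ le_rfl)).neg
  have hdescent : ∀ x ∈ Ω, b ≤ V x → fderiv ℝ V x (-gradient V x) < 0 := fun x hx hbx => by
    rw [map_neg, neg_lt_zero, ← InnerProductSpace.toDual_symm_apply]
    exact real_inner_self_pos.2 (by simpa using hcrit x hx hbx)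
  obtain ⟨r, δ, hr, hhom⟩ := exists_homotopicRel_le_max_sub hΩ hV hgrad hdescent
  have hVΩ : Continuous fun x : Ω => V x :=
    continuousOn_iff_continuous_domRestrict.1 hV.continuousOn
  have hiter : ∀ x, ∃ n, ∀ᶠ y in 𝓝 x, r^[n] y ∈ {x : Ω | V x ≤ b} := fun x => by
    have hK : IsCompact {y : Ω | V y ≤ max b (V x + 1)} := by
      rw [Subtype.isCompact_iff]
      convert hcompact (max b (V x + 1)) using 1
      ext y
      simp [and_comm]
    obtain ⟨δ₀, hδ₀, hle⟩ := hK.exists_forall_le' δ.continuous.continuousOn fun y _ => (hr y).1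
    obtain ⟨n, hn⟩ := exists_nat_ge ((max b (V x + 1) - b) / δ₀)
    refine ⟨n, (hVΩ.continuousAt.eventually_lt_const (lt_add_one (V x))).mono fun y hy => ?_⟩
    refine (iterate_le_max_of_forall_le_max hδ₀.le (φ := fun x : Ω => V x) (fun y hy => ?_)
      (le_max_left b (V x + 1)) (hy.le.trans (le_max_right _ _)) n).trans (max_le le_rfl ?_)
    · exact (hr y).2.trans (max_le_max_left b (sub_le_sub_left (hle y hy) _))
    · linarith [(div_le_iff₀ hδ₀).1 hn]
  obtain ⟨r', hr', hhom'⟩ := exists_homotopicRel_forall_mem hhom hiter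
  refine isSDR_of_homotopicRel (sep_subset _ _) (fun x => ⟨(r' x).2, hr' x⟩) ?_
  simpa only [mem_ofPred_eq, Subtype.coe_prop, true_and] using hhom'

end Descent

theorem morse_sublevel_is_deformation_retract_general {m : ℕ} (F : X m → Set (X m))
    (hF : Standing F) (𝒜 : Set (X m)) (h𝒜 : IsAttractor F 𝒜)
    (l : ℕ) (M : ℕ → Set (X m)) (hM : ∀ k ∈ Icc 1 l, IsClosed (M k) ∧ M k ⊆ 𝒜)
    (V : X m → ℝ) (hV : ContDiffOn ℝ 1 V (basin F 𝒜)) (hru : RadiallyUnbounded (basin F 𝒜) V)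
    (hML : IsMLFunction F 𝒜 l M V)
    (b : ℝ) (hcrit : ∀ x ∈ basin F 𝒜, b ≤ V x → fderiv ℝ V x ≠ 0) :
    IsSDR {x ∈ basin F 𝒜 | V x ≤ b} (basin F 𝒜) := by
  have hcompact := hru.isCompact_sublevel hML.1
  have hopen : IsOpen (basin F 𝒜) := by
    rcases (basin F 𝒜).eq_empty_or_nonempty with hempty | hne
    · simp [hempty]
    obtain ⟨x, hx⟩ := hML.nonempty_of_basin_nonempty hF hru hne
    refine isOpen_basin hF h𝒜 ⟨x, iUnion₂_subset (fun k hk => (hM k hk).2) hx⟩ fun x hx =>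
      ⟨_, hcompact (V x), fun t ht y hy => ⟨reach_subset_basin hF hx ht hy, ?_⟩⟩
    exact hML.le_of_mem_reach hF (fun k hk => (hM k hk).1) hx ht hy
  exact isSDR_sublevel_of_fderiv_ne_zero hopen hV hcompact hcrit

/-- from the proof of Theorem 5.2: for a radially unbounded
strict smooth Morse–Lyapunov function `V` of a Morse decomposition on the basin
`Ω = Ω(𝒜)`, any sublevel set `V_b` with `V < b` on `𝒜` is a strong deformation
retract of `Ω`. -/
theorem morse_sublevel_is_deformation_retract {m : ℕ} (F : X m → Set (X m))
    (hF : Standing F) (𝒜 : Set (X m)) (h𝒜 : IsAttractor F 𝒜)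
    (l : ℕ) (M : ℕ → Set (X m)) (hMD : IsMorseDecomposition F 𝒜 l M)
    (V w : X m → ℝ)
    (hV : ContDiffOn ℝ (⊤ : ℕ∞) V (basin F 𝒜)) (hru : RadiallyUnbounded (basin F 𝒜) V)
    (hML : IsStrictML F 𝒜 l M V)
    (hwc : ContinuousOn w (basin F 𝒜)) (hwn : ∀ x ∈ basin F 𝒜, 0 ≤ w x)
    (hwD : ∀ x ∈ ⋃ k ∈ Icc 1 l, M k, w x = 0)
    (hwp : ∀ x ∈ basin F 𝒜 \ ⋃ k ∈ Icc 1 l, M k, 0 < w x)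
    (hd : ∀ x ∈ basin F 𝒜, ∀ v ∈ F x, fderiv ℝ V x v ≤ -w x)
    (b : ℝ) (hb : ∀ x ∈ 𝒜, V x < b) :
    IsSDR {x ∈ basin F 𝒜 | V x ≤ b} (basin F 𝒜) := by
  refine morse_sublevel_is_deformation_retract_general F hF 𝒜 h𝒜 l M
    (fun k hk => (hMD.1 k hk.1 hk.2).imp_left IsCompact.isClosed) V (hV.of_le (by simp)) hru hML.1 b
    fun x hx hbx hzero => ?_
  obtain ⟨v, hv⟩ := (hF.1 x).1
  have hxD : x ∉ ⋃ k ∈ Icc 1 l, M k := fun hxD =>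
    (hb x (iUnion₂_subset (fun k hk => (hMD.1 k hk.1 hk.2).2) hxD)).not_ge hbx
  have hdecr : (0 : ℝ) ≤ -w x := by
    simpa only [hzero, zero_apply] using hd x hx v hv
  linarith [hwp x ⟨hx, hxD⟩]

end DI
end
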